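/- arXiv:2305.09486 — 2 statements merged into one kernel-verified Lean document; each statement's English description precedes it below -/
import Mathlib

section
/- Let N ≥ 1, 0 < s < 1, and let Ω ⊂ ℝ^N be a nonempty bounded open set with inradius R_Ω. Then for every q with 1 ≤ q < 1*_s = N/(N−s), the best constant satisfies S_{s,q}(Ω) ≤ 𝒮_{s,1*} · (ω_N R_Ω^N)^{(1/1*_s) − (1/q)}. -/
open MeasureTheory Real
open scoped ENNReal

noncomputable section

/-- Euclidean space `ℝ^N`. -/
abbrev Rn (N : ℕ) := EuclideanSpace ℝ (Fin N)

/-- The Gagliardo `W^{s,1}` seminorm `[u]_{s,1}`, as an extended nonnegative real. -/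
def gagE (N : ℕ) (s : ℝ) (u : Rn N → ℝ) : ℝ≥0∞ :=
  ∫⁻ x, ∫⁻ y, ENNReal.ofReal (|u x - u y| / dist x y ^ ((N : ℝ) + s))

/-- Membership in `W^{s,1}(ℝ^N)`: integrable with finite Gagliardo seminorm. -/
def memW (N : ℕ) (s : ℝ) (u : Rn N → ℝ) : Prop :=
  Integrable u volume ∧ gagE N s u < ⊤

/-- Real-valued Gagliardo seminorm. -/
def gag (N : ℕ) (s : ℝ) (u : Rn N → ℝ) : ℝ := (gagE N s u).toReal

/-- The `L^q(ℝ^N)` norm. -/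
def Lq (N : ℕ) (q : ℝ) (u : Rn N → ℝ) : ℝ := (∫ x, |u x| ^ q) ^ (1 / q)

/-- `u` is nonzero as an element of a Lebesgue-type space. -/
def nontriv (N : ℕ) (u : Rn N → ℝ) : Prop := ¬ u =ᵐ[(volume : Measure (Rn N))] 0

/-- The best constant `S_{s,q}(Ω)` of the embedding `W^{s,1}_0(Ω) ↪ L^q(Ω)`. -/
def SDom (N : ℕ) (s q : ℝ) (Ω : Set (Rn N)) : ℝ :=
  sInf { r : ℝ | ∃ u : Rn N → ℝ, memW N s u ∧
      (∀ᵐ x ∂(volume : Measure (Rn N)), x ∉ Ω → u x = 0) ∧ nontriv N u ∧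
      r = gag N s u / Lq N q u }

/-- The critical constant `𝒮_{s,1*}`. -/
def Scrit (N : ℕ) (s : ℝ) : ℝ :=
  sInf { r : ℝ | ∃ u : Rn N → ℝ, memW N s u ∧ nontriv N u ∧
      r = gag N s u / Lq N ((N : ℝ) / ((N : ℝ) - s)) u }

/-- The volume `ω_N` of the unit ball in `ℝ^N`. -/
def omegaN (N : ℕ) : ℝ := π ^ ((N : ℝ) / 2) / Real.Gamma ((N : ℝ) / 2 + 1)

/-- The inradius `R_Ω` of a set `Ω ⊆ ℝ^N`. -/
def inradius (N : ℕ) (Ω : Set (Rn N)) : ℝ :=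
  sSup { R : ℝ | 0 < R ∧ ∃ x ∈ Ω, Metric.ball x R ⊆ Ω }

/-!
Polarization with respect to a hyperplane does not increase the nonlocal perimeter of a set for a
nonincreasing radial kernel. Averaging over all hyperplanes shows that, as long as a set of the
volume of a ball `B` centred at the origin is not close to `B`, some polarization moves a definite
amount of its mass into `B`; hence iterated polarizations of the set converge to `B`, and by Fatou's
lemma `B` has the least perimeter. The coarea formula and Minkowski's inequality for the layer-cake
decomposition turn this into the sharp Sobolev inequality: `𝒮_{s,1*}` is at least the fractional
isoperimetric quotient of a ball, which scaling makes the same for all balls. Testing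
`S_{s,q}(Ω)` with indicators of balls `B_R(x) ⊆ Ω` and letting `R` tend to `R_Ω` gives the bound.
-/

open scoped NNReal MeasureTheory

section NonlocalVariation

open Filter Topology

variable {X : Type*} [PseudoEMetricSpace X] [MeasureSpace X]

/-- The nonlocal variation `∬ |u x - u y| k(d(x, y)) dx dy` of `u` with radial kernel `k`; for
`k r = r ^ (-(N + s))` on `ℝ^N` it is the Gagliardo seminorm `[u]_{s,1}`. -/
def nonlocalVariation (k : ℝ≥0∞ → ℝ≥0∞) (u : X → ℝ) : ℝ≥0∞ :=
  ∫⁻ x, ∫⁻ y, ‖u x - u y‖ₑ * k (edist x y)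

/-- The nonlocal perimeter of a set: the nonlocal variation of its indicator function. -/
def nonlocalPerimeter (k : ℝ≥0∞ → ℝ≥0∞) (A : Set X) : ℝ≥0∞ :=
  nonlocalVariation k (A.indicator 1)

variable {k : ℝ≥0∞ → ℝ≥0∞} {u v : X → ℝ}

theorem nonlocalVariation_congr_ae (h : u =ᵐ[volume] v) :
    nonlocalVariation k u = nonlocalVariation k v := by
  refine lintegral_congr_ae ?_
  filter_upwards [h] with x hx
  refine lintegral_congr_ae ?_
  filter_upwards [h] with y hy
  rw [hx, hy]

theorem nonlocalVariation_abs_le : nonlocalVariation k (fun x => |u x|) ≤ nonlocalVariation k u :=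
  lintegral_mono fun _ => lintegral_mono fun _ => mul_le_mul_left
    (enorm_le_iff_norm_le.2 (abs_abs_sub_abs_le _ _)) _

theorem measurable_enorm_sub_mul_edist [OpensMeasurableSpace X] [SecondCountableTopology X]
    (hk : Measurable k) (hu : Measurable u) :
    Measurable fun p : X × X => ‖u p.1 - u p.2‖ₑ * k (edist p.1 p.2) :=
  ((hu.comp measurable_fst).sub (hu.comp measurable_snd)).enorm.mul (hk.comp measurable_edist)

theorem enorm_sub_eq_lintegral_indicator_Ioi (a b : ℝ) :
    ‖a - b‖ₑ = ∫⁻ t : ℝ, ‖(Set.Ioi t).indicator (1 : ℝ → ℝ) a - (Set.Ioi t).indicator 1 b‖ₑ := by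
  have integrand (t : ℝ) : ‖(Set.Ioi t).indicator (1 : ℝ → ℝ) a - (Set.Ioi t).indicator 1 b‖ₑ =
      (Set.Ico (min a b) (max a b)).indicator 1 t := by
    simp only [Set.indicator_apply, Set.mem_Ioi, Set.mem_Ico, min_le_iff, lt_max_iff]
    by_cases ha : t < a <;> by_cases hb : t < b <;> simp [ha, hb, not_lt.1]
  simp_rw [integrand]
  rw [lintegral_indicator_one measurableSet_Ico, Real.volume_Ico, max_sub_min_eq_abs, abs_sub_comm,
    Real.enorm_eq_ofReal_abs]

theorem nonlocalVariation_le_liminf_of_tendsto [OpensMeasurableSpace X]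
    [SecondCountableTopology X] [SFinite (volume : Measure X)] (hk : Measurable k)
    {w : ℕ → X → ℝ} (hw : ∀ n, Measurable (w n))
    (h : ∀ᵐ x, Tendsto (w · x) atTop (𝓝 (u x))) :
    nonlocalVariation k u ≤ liminf (fun n => nonlocalVariation k (w n)) atTop := by
  have integrand_measurable (n : ℕ) := measurable_enorm_sub_mul_edist hk (hw n)
  have integrand_le {x y : X} (hx : Tendsto (w · x) atTop (𝓝 (u x)))
      (hy : Tendsto (w · y) atTop (𝓝 (u y))) :
      ‖u x - u y‖ₑ * k (edist x y) ≤
        liminf (fun n => ‖w n x - w n y‖ₑ * k (edist x y)) atTop := by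
    rcases eq_or_ne ‖u x - u y‖ₑ 0 with h0 | h0
    · simp [h0]
    · exact (ENNReal.Tendsto.mul_const (hx.sub hy).enorm (.inl h0)).liminf_eq.ge
  calc nonlocalVariation k u
      ≤ ∫⁻ x, ∫⁻ y, liminf (fun n => ‖w n x - w n y‖ₑ * k (edist x y)) atTop := by
        refine lintegral_mono_ae ?_
        filter_upwards [h] with x hx
        refine lintegral_mono_ae ?_
        filter_upwards [h] with y hy
        exact integrand_le hx hy
    _ ≤ ∫⁻ x, liminf (fun n => ∫⁻ y, ‖w n x - w n y‖ₑ * k (edist x y)) atTop :=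
        lintegral_mono fun x => lintegral_liminf_le fun n =>
          (integrand_measurable n).comp measurable_prodMk_left
    _ ≤ _ := lintegral_liminf_le fun n => (integrand_measurable n).lintegral_prod_right'

theorem nonlocalVariation_eq_lintegral_nonlocalPerimeter [OpensMeasurableSpace X]
    [SecondCountableTopology X] [SFinite (volume : Measure X)] (hk : Measurable k)
    (hu : Measurable u) :
    nonlocalVariation k u = ∫⁻ t : ℝ, nonlocalPerimeter k {x | t < u x} := by
  have superlevel_measurable : Measurable fun p : ℝ × X => (Set.Ioi p.1).indicator (1 : ℝ → ℝ)
      (u p.2) :=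
    Measurable.ite (measurableSet_lt measurable_fst (hu.comp measurable_snd)) measurable_const
      measurable_const
  have integrand_measurable : Measurable fun p : (X × X) × ℝ =>
      ‖(Set.Ioi p.2).indicator (1 : ℝ → ℝ) (u p.1.1) - (Set.Ioi p.2).indicator 1 (u p.1.2)‖ₑ *
        k (edist p.1.1 p.1.2) :=
    ((superlevel_measurable.comp (measurable_snd.prodMk measurable_fst.fst)).sub
      (superlevel_measurable.comp (measurable_snd.prodMk measurable_fst.snd))).enorm.mul
      (hk.comp (measurable_edist.comp measurable_fst))
  calc nonlocalVariation k u
      = ∫⁻ x, ∫⁻ y, ∫⁻ t : ℝ, ‖(Set.Ioi t).indicator (1 : ℝ → ℝ) (u x) -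
          (Set.Ioi t).indicator 1 (u y)‖ₑ * k (edist x y) := by
        refine lintegral_congr fun x => lintegral_congr fun y => ?_
        rw [lintegral_mul_const _ ?_, ← enorm_sub_eq_lintegral_indicator_Ioi]
        exact ((superlevel_measurable.comp measurable_prodMk_right).sub
          (superlevel_measurable.comp measurable_prodMk_right)).enorm
    _ = ∫⁻ x, ∫⁻ t : ℝ, ∫⁻ y, ‖(Set.Ioi t).indicator (1 : ℝ → ℝ) (u x) -
          (Set.Ioi t).indicator 1 (u y)‖ₑ * k (edist x y) :=
        lintegral_congr fun x => lintegral_lintegral_swap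
          (integrand_measurable.comp ((measurable_const.prodMk measurable_fst).prodMk
            measurable_snd)).aemeasurable
    _ = ∫⁻ t : ℝ, nonlocalPerimeter k {x | t < u x} :=
        lintegral_lintegral_swap ((integrand_measurable.comp
          ((measurable_fst.fst.prodMk measurable_snd).prodMk
            measurable_fst.snd)).lintegral_prod_right').aemeasurable

end NonlocalVariation

theorem lintegral_le_of_add_comp_le {X : Type*} [MeasurableSpace X] {μ : Measure X} {σ : X → X}
    (hσ : MeasurePreserving σ μ μ) {f g : X → ℝ≥0∞} (hf : Measurable f) (hg : Measurable g)
    (h : ∀ x, f x + f (σ x) ≤ g x + g (σ x)) : ∫⁻ x, f x ∂μ ≤ ∫⁻ x, g x ∂μ := by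
  have doubled := lintegral_mono (μ := μ) h
  rw [lintegral_add_left hf, lintegral_add_left hg, hσ.lintegral_comp hf, hσ.lintegral_comp hg,
    ← two_mul, ← two_mul] at doubled
  exact (ENNReal.mul_le_mul_iff_right two_ne_zero ENNReal.ofNat_ne_top).1 doubled

section Polarization

variable {V : Type*} [NormedAddCommGroup V] [InnerProductSpace ℝ V]

/-- The reflection in the perpendicular bisector of `0` and `z`, which exchanges `0` and `z`
(for `z = 0` it is the identity). -/
def bisectorReflection (z x : V) : V := z + (ℝ ∙ z)ᗮ.reflection x

theorem bisectorReflection_eq_add_smul (z x : V) :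
    bisectorReflection z x = x + (1 - 2 * inner ℝ z x / ‖z‖ ^ 2) • z := by
  rw [bisectorReflection, Submodule.reflection_orthogonal_apply,
    Submodule.reflection_singleton_apply]
  simp only [RCLike.ofReal_real_eq_id, id]
  module

theorem bisectorReflection_zero (x : V) : bisectorReflection 0 x = x := by
  rw [bisectorReflection_eq_add_smul, smul_zero, add_zero]

theorem bisectorReflection_involutive (z : V) : Function.Involutive (bisectorReflection z) := by
  intro x
  simp only [bisectorReflection, map_add, Submodule.reflection_reflection,
    Submodule.reflection_orthogonalComplement_singleton_eq_neg]
  abel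

theorem dist_bisectorReflection_bisectorReflection (z x y : V) :
    dist (bisectorReflection z x) (bisectorReflection z y) = dist x y := by
  rw [bisectorReflection, bisectorReflection, dist_add_left, LinearIsometryEquiv.dist_map]

theorem norm_bisectorReflection (z x : V) : ‖bisectorReflection z x‖ = ‖x - z‖ := by
  have center_eq : bisectorReflection z z = 0 := by
    rw [bisectorReflection, Submodule.reflection_orthogonalComplement_singleton_eq_neg,
      add_neg_cancel]
  rw [← dist_zero_right, ← center_eq, dist_bisectorReflection_bisectorReflection, dist_eq_norm]

theorem norm_le_norm_bisectorReflection_iff {z x : V} :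
    ‖x‖ ≤ ‖bisectorReflection z x‖ ↔ 2 * inner ℝ z x ≤ ‖z‖ ^ 2 := by
  rw [norm_bisectorReflection, ← sq_le_sq₀ (norm_nonneg _) (norm_nonneg _), norm_sub_sq_real,
    real_inner_comm]
  constructor <;> intro h <;> linarith

theorem bisectorReflection_eq_self_of_norm_eq {z x : V} (h : ‖bisectorReflection z x‖ = ‖x‖) :
    bisectorReflection z x = x := by
  rcases eq_or_ne z 0 with rfl | hz
  · exact bisectorReflection_zero x
  have on_bisector : 2 * inner ℝ z x = ‖z‖ ^ 2 := by
    have := congrArg (· ^ 2) h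
    simp only [norm_bisectorReflection, norm_sub_sq_real, real_inner_comm] at this
    linarith
  rw [bisectorReflection_eq_add_smul, on_bisector, div_self (by positivity), sub_self, zero_smul,
    add_zero]

theorem dist_le_dist_bisectorReflection {z x y : V} (hx : ‖x‖ ≤ ‖bisectorReflection z x‖)
    (hy : ‖y‖ ≤ ‖bisectorReflection z y‖) : dist x y ≤ dist x (bisectorReflection z y) := by
  rcases eq_or_ne z 0 with rfl | hz
  · rw [bisectorReflection_zero]
  rw [norm_le_norm_bisectorReflection_iff] at hx hy
  have coefficient_nonneg : 0 ≤ 1 - 2 * inner ℝ z y / ‖z‖ ^ 2 := by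
    rw [sub_nonneg, div_le_one (by positivity)]
    exact hy
  have sq_sub_sq : ‖x - bisectorReflection z y‖ ^ 2 - ‖x - y‖ ^ 2 =
      (1 - 2 * inner ℝ z y / ‖z‖ ^ 2) * (‖z‖ ^ 2 - 2 * inner ℝ z x) := by
    rw [bisectorReflection_eq_add_smul, ← sub_sub, norm_sub_sq_real (x - y), inner_smul_right,
      norm_smul, mul_pow, Real.norm_eq_abs, sq_abs, inner_sub_left, real_inner_comm z x,
      real_inner_comm z y]
    field_simp
    ring
  rw [dist_eq_norm, dist_eq_norm, ← sq_le_sq₀ (norm_nonneg _) (norm_nonneg _), ← sub_nonneg,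
    sq_sub_sq]
  exact mul_nonneg coefficient_nonneg (sub_nonneg.2 hx)

/-- The polarization (two-point rearrangement) of `A` with respect to `bisectorReflection z`: on
every pair of mirror points met by `A` in exactly one point, that point is placed on the side of
the bisector containing the origin. -/
def polarization (z : V) (A : Set V) : Set V :=
  (A ∩ bisectorReflection z ⁻¹' A) ∪
    ({x | ‖x‖ ≤ ‖bisectorReflection z x‖} ∩ (A ∪ bisectorReflection z ⁻¹' A))

variable {A : Set V} {z x : V}

theorem mem_polarization_of_norm_le (hx : ‖x‖ ≤ ‖bisectorReflection z x‖) :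
    x ∈ polarization z A ↔ x ∈ A ∨ bisectorReflection z x ∈ A := by
  simp only [polarization, Set.mem_union, Set.mem_inter_iff, Set.mem_preimage, Set.mem_ofPred_eq,
    hx, true_and]
  tauto

theorem bisectorReflection_mem_polarization_of_norm_le (hx : ‖x‖ ≤ ‖bisectorReflection z x‖) :
    bisectorReflection z x ∈ polarization z A ↔ x ∈ A ∧ bisectorReflection z x ∈ A := by
  simp only [polarization, Set.mem_union, Set.mem_inter_iff, Set.mem_preimage, Set.mem_ofPred_eq,
    bisectorReflection_involutive z x]
  rcases hx.lt_or_eq with hlt | heq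
  · simp only [hlt.not_ge, false_and, or_false, and_comm]
  · simp only [bisectorReflection_eq_self_of_norm_eq heq.symm, le_refl, true_and, or_self, and_self]

theorem enorm_indicator_polarization_sub_mul_add_le {k : ℝ≥0∞ → ℝ≥0∞} (hk : Antitone k) {y : V}
    (hx : ‖x‖ ≤ ‖bisectorReflection z x‖) (hy : ‖y‖ ≤ ‖bisectorReflection z y‖) :
    letI σ := bisectorReflection z
    letI I (B : Set V) (x y : V) : ℝ≥0∞ :=
      ‖B.indicator (1 : V → ℝ) x - B.indicator 1 y‖ₑ * k (edist x y)
    I (polarization z A) x y + I (polarization z A) (σ x) y +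
        (I (polarization z A) x (σ y) + I (polarization z A) (σ x) (σ y)) ≤
      I A x y + I A (σ x) y + (I A x (σ y) + I A (σ x) (σ y)) := by
  classical
  have edist_reflected : edist (bisectorReflection z x) (bisectorReflection z y) = edist x y := by
    simp only [edist_dist, dist_bisectorReflection_bisectorReflection]
  have edist_crossed : edist (bisectorReflection z x) y = edist x (bisectorReflection z y) := by
    rw [edist_dist, edist_dist, ← dist_bisectorReflection_bisectorReflection z,
      bisectorReflection_involutive]
  obtain ⟨d, hd⟩ : ∃ d, k (edist x y) = k (edist x (bisectorReflection z y)) + d :=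
    exists_add_of_le (hk (by
      simpa only [edist_dist] using
        ENNReal.ofReal_le_ofReal (dist_le_dist_bisectorReflection hx hy)))
  simp only [Set.indicator_apply, mem_polarization_of_norm_le hx,
    bisectorReflection_mem_polarization_of_norm_le hx, mem_polarization_of_norm_le hy,
    bisectorReflection_mem_polarization_of_norm_le hy, edist_reflected, edist_crossed, hd]
  by_cases hxA : x ∈ A <;> by_cases hσxA : bisectorReflection z x ∈ A <;>
    by_cases hyA : y ∈ A <;> by_cases hσyA : bisectorReflection z y ∈ A <;>
    first
    | simp [hxA, hσxA, hyA, hσyA, add_comm, add_left_comm]; done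
    | simpa [hxA, hσxA, hyA, hσyA, add_comm, add_left_comm] using le_add_left (le_add_left le_rfl)

theorem continuous_bisectorReflection (z : V) : Continuous (bisectorReflection z) :=
  continuous_const.add (ℝ ∙ z)ᗮ.reflection.continuous

variable [MeasurableSpace V] [BorelSpace V]

theorem measurableSet_polarization (hA : MeasurableSet A) (z : V) :
    MeasurableSet (polarization z A) := by
  have hσA : MeasurableSet (bisectorReflection z ⁻¹' A) :=
    (continuous_bisectorReflection z).measurable hA
  exact (hA.inter hσA).union ((isClosed_le continuous_norm
    (continuous_bisectorReflection z).norm).measurableSet.inter (hA.union hσA))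

variable [FiniteDimensional ℝ V]

theorem measurePreserving_bisectorReflection (z : V) :
    MeasurePreserving (bisectorReflection z) volume volume :=
  (measurePreserving_add_left volume z).comp (ℝ ∙ z)ᗮ.reflection.measurePreserving

theorem lintegral_le_of_add_bisectorReflection_le (z : V) {f g : V → ℝ≥0∞} (hf : Measurable f)
    (hg : Measurable g)
    (h : ∀ x, ‖x‖ ≤ ‖bisectorReflection z x‖ →
      f x + f (bisectorReflection z x) ≤ g x + g (bisectorReflection z x)) :
    ∫⁻ x, f x ≤ ∫⁻ x, g x := by
  refine lintegral_le_of_add_comp_le (measurePreserving_bisectorReflection z) hf hg fun x => ?_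
  rcases le_total ‖x‖ ‖bisectorReflection z x‖ with hx | hx
  · exact h x hx
  · have := h (bisectorReflection z x) (by rwa [bisectorReflection_involutive])
    rwa [bisectorReflection_involutive, add_comm, add_comm (g _)] at this

theorem measure_le_of_indicator_add_bisectorReflection_le (z : V) {B : Set V}
    (hA : MeasurableSet A) (hB : MeasurableSet B)
    (h : ∀ x, ‖x‖ ≤ ‖bisectorReflection z x‖ →
      A.indicator (1 : V → ℝ≥0∞) x + A.indicator 1 (bisectorReflection z x) ≤
        B.indicator 1 x + B.indicator 1 (bisectorReflection z x)) :
    volume A ≤ volume B := by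
  rw [← lintegral_indicator_one hA, ← lintegral_indicator_one hB]
  exact lintegral_le_of_add_bisectorReflection_le z (measurable_one.indicator hA)
    (measurable_one.indicator hB) h

theorem volume_polarization (hA : MeasurableSet A) (z : V) :
    volume (polarization z A) = volume A := by
  classical
  have hPA := measurableSet_polarization hA z
  have indicator_add (x : V) (hx : ‖x‖ ≤ ‖bisectorReflection z x‖) :
      (polarization z A).indicator (1 : V → ℝ≥0∞) x +
        (polarization z A).indicator 1 (bisectorReflection z x) =
      A.indicator 1 x + A.indicator 1 (bisectorReflection z x) := by
    simp only [Set.indicator_apply, mem_polarization_of_norm_le hx,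
      bisectorReflection_mem_polarization_of_norm_le hx]
    by_cases hxA : x ∈ A <;> by_cases hσA : bisectorReflection z x ∈ A <;> simp [hxA, hσA]
  exact le_antisymm
    (measure_le_of_indicator_add_bisectorReflection_le z hPA hA fun x hx => (indicator_add x hx).le)
    (measure_le_of_indicator_add_bisectorReflection_le z hA hPA fun x hx => (indicator_add x hx).ge)

theorem volume_polarization_sdiff_ball_add_le (hA : MeasurableSet A) (z : V) (r : ℝ) :
    volume (polarization z A \ Metric.ball 0 r) +
        volume ((Metric.ball 0 r \ A) ∩ bisectorReflection z ⁻¹' (A \ Metric.ball 0 r)) ≤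
      volume (A \ Metric.ball 0 r) := by
  classical
  have hmoved : MeasurableSet
      ((Metric.ball 0 r \ A) ∩ bisectorReflection z ⁻¹' (A \ Metric.ball 0 r)) :=
    (measurableSet_ball.diff hA).inter
      ((continuous_bisectorReflection z).measurable (hA.diff measurableSet_ball))
  rw [← measure_union
    (Set.disjoint_sdiff_left.mono_right (Set.inter_subset_left.trans Set.sdiff_subset)) hmoved]
  refine measure_le_of_indicator_add_bisectorReflection_le z
    (((measurableSet_polarization hA z).diff measurableSet_ball).union hmoved)
    (hA.diff measurableSet_ball) fun x hx => ?_
  simp only [Set.indicator_apply, Set.mem_sdiff, Set.mem_union, Set.mem_inter_iff,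
    Set.mem_preimage, mem_polarization_of_norm_le hx,
    bisectorReflection_mem_polarization_of_norm_le hx, mem_ball_zero_iff,
    bisectorReflection_involutive z x]
  have mono : ‖bisectorReflection z x‖ < r → ‖x‖ < r := hx.trans_lt
  by_cases hxA : x ∈ A <;> by_cases hσA : bisectorReflection z x ∈ A <;>
    by_cases hxr : ‖x‖ < r <;> by_cases hσr : ‖bisectorReflection z x‖ < r <;>
    first | exact absurd (mono hσr) hxr | simp [hxA, hσA, hxr, hσr]

theorem nonlocalPerimeter_polarization_le {k : ℝ≥0∞ → ℝ≥0∞} (hk : Antitone k)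
    (hA : MeasurableSet A) (z : V) :
    nonlocalPerimeter k (polarization z A) ≤ nonlocalPerimeter k A := by
  have integrand_measurable {B : Set V} (hB : MeasurableSet B) :=
    measurable_enorm_sub_mul_edist hk.measurable ((measurable_one (α := ℝ)).indicator hB)
  have slice_measurable {B : Set V} (hB : MeasurableSet B) (x : V) :
      Measurable fun y => ‖B.indicator (1 : V → ℝ) x - B.indicator 1 y‖ₑ * k (edist x y) :=
    (integrand_measurable hB).comp measurable_prodMk_left
  have hPA := measurableSet_polarization hA z
  refine lintegral_le_of_add_bisectorReflection_le z
    (integrand_measurable hPA).lintegral_prod_right' (integrand_measurable hA).lintegral_prod_right'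
    fun x hx => ?_
  rw [← lintegral_add_left (slice_measurable hPA x), ← lintegral_add_left (slice_measurable hA x)]
  exact lintegral_le_of_add_bisectorReflection_le z
    ((slice_measurable hPA x).add (slice_measurable hPA _))
    ((slice_measurable hA x).add (slice_measurable hA _))
    fun y hy => enorm_indicator_polarization_sub_mul_add_le hk hx hy

end Polarization

theorem addHaar_image_le_of_lipschitzOnWith {V : Type*} [NormedAddCommGroup V] [NormedSpace ℝ V]
    [FiniteDimensional ℝ V] [MeasurableSpace V] [BorelSpace V] (μ : Measure V) [μ.IsAddHaarMeasure]
    {K : ℝ≥0} {f : V → V} {s : Set V} (hf : LipschitzOnWith K f s) :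
    μ (f '' s) ≤ (K : ℝ≥0∞) ^ Module.finrank ℝ V * μ s := by
  rw [Measure.isAddLeftInvariant_eq_smul μ μH[Module.finrank ℝ V], Measure.smul_apply,
    Measure.smul_apply, ENNReal.smul_def, ENNReal.smul_def,
    smul_eq_mul, smul_eq_mul, mul_left_comm, ← ENNReal.rpow_natCast]
  gcongr
  exact hf.hausdorffMeasure_image_le (Nat.cast_nonneg _)

section Averaging

variable {V : Type*} [NormedAddCommGroup V] [InnerProductSpace ℝ V]

theorem exists_bisectorReflection_eq {x y : V} (h : ‖x‖ < ‖y‖) :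
    ∃ z, bisectorReflection z x = y := by
  have hxy : y - x ≠ 0 := sub_ne_zero.2 fun hyx => h.ne (congrArg norm hyx.symm)
  have hsq : ‖y‖ ^ 2 - ‖x‖ ^ 2 ≠ 0 :=
    (sub_pos.2 (pow_lt_pow_left₀ h (norm_nonneg x) two_ne_zero)).ne'
  have hinner : ‖y‖ ^ 2 - ‖x‖ ^ 2 = ‖y - x‖ ^ 2 + 2 * inner ℝ (y - x) x := by
    rw [norm_sub_sq_real, inner_sub_left, real_inner_self_eq_norm_sq]
    ring
  -- The perpendicular bisector of `x` and `y` is `⟪y - x, ·⟫ = (‖y‖² - ‖x‖²) / 2`; its mirror image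
  -- of the origin is `z`.
  refine ⟨((‖y‖ ^ 2 - ‖x‖ ^ 2) / ‖y - x‖ ^ 2) • (y - x), ?_⟩
  have coefficient : 1 - 2 * inner ℝ (((‖y‖ ^ 2 - ‖x‖ ^ 2) / ‖y - x‖ ^ 2) • (y - x)) x /
      ‖((‖y‖ ^ 2 - ‖x‖ ^ 2) / ‖y - x‖ ^ 2) • (y - x)‖ ^ 2 =
      ‖y - x‖ ^ 2 / (‖y‖ ^ 2 - ‖x‖ ^ 2) := by
    rw [real_inner_smul_left, norm_smul, mul_pow, Real.norm_eq_abs, sq_abs]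
    have := norm_ne_zero_iff.2 hxy
    field_simp
    rw [hinner]
    ring
  have := norm_ne_zero_iff.2 hxy
  rw [bisectorReflection_eq_add_smul, coefficient, smul_smul, div_mul_div_cancel₀ hsq,
    div_self (pow_ne_zero 2 this), one_smul, add_sub_cancel]

theorem lipschitzOnWith_bisectorReflection_center (x : V) {δ : ℝ≥0} (hδ : δ ≠ 0) :
    LipschitzOnWith (1 + 4 * ‖x‖₊ / δ) (bisectorReflection · x) {z | δ ≤ ‖z‖} := by
  refine LipschitzOnWith.of_dist_le_mul fun z hz w hw => ?_
  have hδ' : (0 : ℝ) < δ := NNReal.coe_pos.2 hδ.bot_lt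
  have hz0 : 0 < ‖z‖ := hδ'.trans_le hz
  have hw0 : 0 < ‖w‖ := hδ'.trans_le hw
  have inversion_sub : ‖(1 / ‖z‖) ^ 2 • z - (1 / ‖w‖) ^ 2 • w‖ = 1 / (‖z‖ * ‖w‖) * ‖z - w‖ := by
    rw [← dist_eq_norm, dist_div_norm_sq_smul (norm_pos_iff.1 hz0) (norm_pos_iff.1 hw0),
      dist_eq_norm, one_pow]
  have decomposition : bisectorReflection z x - bisectorReflection w x = z - w -
      (2 : ℝ) • (inner ℝ (z - w) x • (1 / ‖z‖) ^ 2 • z +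
        inner ℝ w x • ((1 / ‖z‖) ^ 2 • z - (1 / ‖w‖) ^ 2 • w)) := by
    rw [bisectorReflection_eq_add_smul, bisectorReflection_eq_add_smul, inner_sub_left]
    module
  have hbound₁ : ‖inner ℝ (z - w) x • (1 / ‖z‖) ^ 2 • z‖ ≤ ‖x‖ / ‖z‖ * ‖z - w‖ := by
    rw [norm_smul, norm_smul, norm_pow, norm_div, norm_one, norm_norm]
    calc ‖inner ℝ (z - w) x‖ * ((1 / ‖z‖) ^ 2 * ‖z‖)
        ≤ ‖z - w‖ * ‖x‖ * ((1 / ‖z‖) ^ 2 * ‖z‖) := by gcongr; exact norm_inner_le_norm _ _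
      _ = ‖x‖ / ‖z‖ * ‖z - w‖ := by field_simp
  have hbound₂ : ‖inner ℝ w x • ((1 / ‖z‖) ^ 2 • z - (1 / ‖w‖) ^ 2 • w)‖ ≤
      ‖x‖ / ‖z‖ * ‖z - w‖ := by
    rw [norm_smul, inversion_sub]
    calc ‖inner ℝ w x‖ * (1 / (‖z‖ * ‖w‖) * ‖z - w‖)
        ≤ ‖w‖ * ‖x‖ * (1 / (‖z‖ * ‖w‖) * ‖z - w‖) := by gcongr; exact norm_inner_le_norm _ _
      _ = ‖x‖ / ‖z‖ * ‖z - w‖ := by field_simp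
  calc dist (bisectorReflection z x) (bisectorReflection w x)
      ≤ ‖z - w‖ + 2 * (‖x‖ / ‖z‖ * ‖z - w‖ + ‖x‖ / ‖z‖ * ‖z - w‖) := by
        rw [dist_eq_norm, decomposition]
        refine (norm_sub_le _ _).trans ?_
        rw [norm_smul, Real.norm_two]
        gcongr
        exact (norm_add_le _ _).trans (add_le_add hbound₁ hbound₂)
    _ = (1 + 4 * ‖x‖ / ‖z‖) * dist z w := by rw [dist_eq_norm]; ring
    _ ≤ _ := by
        push_cast
        gcongr
        exact hz

variable [FiniteDimensional ℝ V] [MeasurableSpace V] [BorelSpace V]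

theorem volume_le_mul_volume_bisectorReflection_mem {r δ : ℝ≥0} (hδ : δ ≠ 0) {M : ℝ} {x : V}
    (hx : ‖x‖ ≤ r) {C : Set V} (hCr : ∀ y ∈ C, r + δ ≤ ‖y‖) (hCM : C ⊆ Metric.ball 0 M) :
    volume C ≤ (1 + 4 * r / δ : ℝ≥0) ^ Module.finrank ℝ V *
      volume {z ∈ Metric.ball 0 (r + M) | bisectorReflection z x ∈ C} := by
  set Z := {z ∈ Metric.ball 0 (r + M) | bisectorReflection z x ∈ C}
  have norm_center_ge (z : V) (hz : z ∈ Z) : δ ≤ ‖z‖ := by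
    have := hCr _ hz.2
    rw [norm_bisectorReflection] at this
    linarith [norm_sub_le x z]
  have C_subset : C ⊆ (bisectorReflection · x) '' Z := by
    intro y hy
    have := hCr y hy
    have hδ' : (0 : ℝ) < δ := NNReal.coe_pos.2 hδ.bot_lt
    obtain ⟨z, rfl⟩ := exists_bisectorReflection_eq (show ‖x‖ < ‖y‖ by linarith)
    refine ⟨z, ⟨?_, hy⟩, rfl⟩
    have := hCM hy
    rw [mem_ball_zero_iff, norm_bisectorReflection] at this
    rw [mem_ball_zero_iff]
    linarith [norm_le_norm_add_norm_sub' z x, norm_sub_rev z x]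
  calc volume C ≤ volume ((bisectorReflection · x) '' Z) := measure_mono C_subset
    _ ≤ (1 + 4 * ‖x‖₊ / δ : ℝ≥0) ^ Module.finrank ℝ V * volume Z :=
        addHaar_image_le_of_lipschitzOnWith volume
          ((lipschitzOnWith_bisectorReflection_center x hδ).mono norm_center_ge)
    _ ≤ _ := by gcongr; exact_mod_cast hx

theorem volume_mul_volume_le_of_volume_reflected_le {r δ : ℝ≥0} (hδ : δ ≠ 0) {M : ℝ} {A C : Set V}
    (hA : MeasurableSet A) (hC : MeasurableSet C) (hAr : ∀ x ∈ A, ‖x‖ ≤ r)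
    (hCr : ∀ y ∈ C, r + δ ≤ ‖y‖) (hCM : C ⊆ Metric.ball 0 M) {η : ℝ≥0∞}
    (hη : ∀ z, volume (A ∩ bisectorReflection z ⁻¹' C) ≤ η) :
    volume C * volume A ≤ (1 + 4 * r / δ : ℝ≥0) ^ Module.finrank ℝ V *
      (η * volume (Metric.ball (0 : V) (r + M))) := by
  set K := ((1 + 4 * r / δ : ℝ≥0) : ℝ≥0∞) ^ Module.finrank ℝ V
  have measurable_reflection : Measurable fun p : V × V => bisectorReflection p.1 p.2 := by
    simp only [bisectorReflection_eq_add_smul]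
    fun_prop
  have pairs_measurable : MeasurableSet {p : V × V | bisectorReflection p.2 p.1 ∈ C} :=
    (measurable_reflection.comp measurable_swap) hC
  calc volume C * volume A
      = ∫⁻ _ in A, volume C := by rw [setLIntegral_const]
    _ ≤ ∫⁻ x in A, K * volume {z ∈ Metric.ball 0 (r + M) | bisectorReflection z x ∈ C} :=
        setLIntegral_mono' hA fun x hx =>
          volume_le_mul_volume_bisectorReflection_mem hδ (hAr x hx) hCr hCM
    _ = K * ((volume.restrict A).prod (volume.restrict (Metric.ball 0 (r + M))))
          {p | bisectorReflection p.2 p.1 ∈ C} := by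
        rw [lintegral_const_mul' _ _ (by finiteness), Measure.prod_apply pairs_measurable]
        congr! 3
        rw [Measure.restrict_apply (measurable_prodMk_left pairs_measurable), Set.inter_comm]
        rfl
    _ = K * ∫⁻ z in Metric.ball 0 (r + M), volume (A ∩ bisectorReflection z ⁻¹' C) := by
        rw [Measure.prod_apply_symm pairs_measurable]
        congr! 3
        rw [Measure.restrict_apply (measurable_prodMk_right pairs_measurable), Set.inter_comm]
        rfl
    _ ≤ K * ∫⁻ _ in Metric.ball (0 : V) (r + M), η := by gcongr with z; exact hη z
    _ = _ := by rw [setLIntegral_const]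

end Averaging

section Isoperimetry

open Filter Topology

section Exhaustion

variable {V : Type*} [NormedAddCommGroup V] [MeasurableSpace V] [OpensMeasurableSpace V]
  {μ : Measure V} [μ.InnerRegularCompactLTTop] {ε : ℝ≥0∞}

theorem exists_measure_sdiff_ball_le {A : Set V} (hA : MeasurableSet A) (hfin : μ A ≠ ⊤)
    (hε : ε ≠ 0) (r : ℝ) : ∃ M ≥ r, μ (A \ Metric.ball 0 M) ≤ ε := by
  obtain ⟨K, -, hK, hlt⟩ := hA.exists_isCompact_sdiff_lt hfin hε
  obtain ⟨M, hrM, hKM⟩ := hK.isBounded.subset_ball_lt r 0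
  exact ⟨M, hrM.le, (measure_mono (Set.sdiff_subset_sdiff_right hKM)).trans hlt.le⟩

theorem exists_measure_ball_sdiff_ball_le [ProperSpace V] {r : ℝ} (hr : 0 < r)
    (hfin : μ (Metric.ball 0 r) ≠ ⊤) (hε : ε ≠ 0) :
    ∃ t ∈ Set.Ioo 0 r, μ (Metric.ball 0 r \ Metric.ball 0 t) ≤ ε := by
  obtain ⟨K, hKr, hK, hlt⟩ := measurableSet_ball.exists_isCompact_sdiff_lt hfin hε
  obtain ⟨t, ht, hKt⟩ := exists_pos_lt_subset_ball hr hK.isClosed hKr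
  exact ⟨t, ht, (measure_mono (Set.sdiff_subset_sdiff_right hKt)).trans hlt.le⟩

end Exhaustion

theorem half_le_measure_inter {X : Type*} [MeasurableSpace X] {μ : Measure X} {S T : Set X}
    {ε : ℝ≥0∞} (hε : ε ≠ ⊤) (hS : ε ≤ μ S) (hST : μ (S \ T) ≤ ε / 2) : ε / 2 ≤ μ (S ∩ T) := by
  refine (ENNReal.add_le_add_iff_right (ENNReal.div_ne_top hε two_ne_zero)).1 ?_
  calc ε / 2 + ε / 2 = ε := ENNReal.add_halves ε
    _ ≤ μ (S ∩ T) + μ (S \ T) := hS.trans (measure_le_inter_add_sdiff μ S T)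
    _ ≤ μ (S ∩ T) + ε / 2 := by gcongr

variable {V : Type*} [NormedAddCommGroup V] [InnerProductSpace ℝ V] [MeasurableSpace V]
  [BorelSpace V]

/-- `B` arises from `A` by finitely many polarizations. -/
def IsIteratedPolarization (A B : Set V) : Prop :=
  Relation.ReflTransGen (fun A B => ∃ z, B = polarization z A) A B

namespace IsIteratedPolarization

variable {A B : Set V}

theorem measurableSet (h : IsIteratedPolarization A B) (hA : MeasurableSet A) :
    MeasurableSet B := by
  induction h with
  | refl => exact hA
  | tail _ hz ih =>
    obtain ⟨z, rfl⟩ := hz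
    exact measurableSet_polarization ih z

end IsIteratedPolarization

variable [FiniteDimensional ℝ V]

theorem volume_reflected_le_of_volume_polarization_lt {A : Set V} (hA : MeasurableSet A)
    {z : V} {r : ℝ} {η : ℝ≥0∞} (hfin : volume (A \ Metric.ball 0 r) ≠ ⊤)
    (h : volume (A \ Metric.ball 0 r) < volume (polarization z A \ Metric.ball 0 r) + η) :
    volume ((Metric.ball 0 r \ A) ∩ bisectorReflection z ⁻¹' (A \ Metric.ball 0 r)) ≤ η :=
  have moved := volume_polarization_sdiff_ball_add_le hA z r
  (ENNReal.add_le_add_iff_left (ne_top_of_le_ne_top hfin (le_self_add.trans moved))).1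
    (moved.trans h.le)

theorem exists_polarization_gain {r M : ℝ} (hr : 0 < r) {ε : ℝ≥0∞} (hε : ε ≠ 0) :
    ∃ η ≠ 0, ∀ A : Set V, MeasurableSet A → volume A = volume (Metric.ball (0 : V) r) →
      ε ≤ volume (A \ Metric.ball 0 r) → volume (A \ Metric.ball 0 M) ≤ ε / 2 →
      ∃ z, volume (polarization z A \ Metric.ball 0 r) + η ≤ volume (A \ Metric.ball 0 r) := by
  have hε2 : ε / 2 ≠ 0 := ENNReal.div_ne_zero.2 ⟨hε, ENNReal.ofNat_ne_top⟩
  obtain ⟨t, ⟨ht0, htr⟩, ht⟩ := exists_measure_ball_sdiff_ball_le (V := V) (μ := volume) hr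
    measure_ball_lt_top.ne hε2
  lift t to ℝ≥0 using ht0.le
  lift r to ℝ≥0 using hr.le
  have htr' : t < r := NNReal.coe_lt_coe.1 htr
  obtain ⟨η, hη0, hη⟩ := ENNReal.exists_nnreal_pos_mul_lt
    (a := ((1 + 4 * t / (r - t) : ℝ≥0) : ℝ≥0∞) ^ Module.finrank ℝ V *
      volume (Metric.ball (0 : V) (t + M))) (b := ε / 2 * (ε / 2))
    (ENNReal.mul_ne_top (by finiteness) measure_ball_lt_top.ne) (mul_ne_zero hε2 hε2)
  refine ⟨η, by exact_mod_cast hη0.ne', fun A hA hvol hfar htail => ?_⟩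
  by_contra! hgain
  set B := Metric.ball (0 : V) r
  have hA_fin : volume A ≠ ⊤ := hvol ▸ measure_ball_lt_top.ne
  have hAB_fin : volume (A \ B) ≠ ⊤ := measure_ne_top_of_subset Set.sdiff_subset hA_fin
  have hε_fin : ε ≠ ⊤ := ne_top_of_le_ne_top hAB_fin hfar
  have hBA : volume (A \ B) = volume (B \ A) := measure_sdiff_symm hA.nullMeasurableSet
    measurableSet_ball.nullMeasurableSet hvol
    (measure_ne_top_of_subset Set.inter_subset_left hA_fin)
  have hout : ε / 2 ≤ volume ((A \ B) ∩ Metric.ball 0 M) := half_le_measure_inter hε_fin hfar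
    ((measure_mono (Set.sdiff_subset_sdiff_left Set.sdiff_subset)).trans htail)
  have hin : ε / 2 ≤ volume ((B \ A) ∩ Metric.ball 0 t) :=
    half_le_measure_inter hε_fin (hfar.trans_eq hBA)
      ((measure_mono (Set.sdiff_subset_sdiff_left Set.sdiff_subset)).trans ht)
  refine hη.not_ge ?_
  calc ε / 2 * (ε / 2) ≤ _ := mul_le_mul' hout hin
    _ ≤ _ := volume_mul_volume_le_of_volume_reflected_le (tsub_pos_of_lt htr').ne'
        ((measurableSet_ball.diff hA).inter measurableSet_ball)
        ((hA.diff measurableSet_ball).inter measurableSet_ball)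
        (fun x hx => (mem_ball_zero_iff.1 hx.2).le)
        (fun y hy => by
          rw [← NNReal.coe_add, add_tsub_cancel_of_le htr'.le]
          simpa [B] using hy.1.2) Set.inter_subset_right
        (fun z => (measure_mono (Set.inter_subset_inter Set.inter_subset_left
          (Set.preimage_mono Set.inter_subset_left))).trans
            (volume_reflected_le_of_volume_polarization_lt hA hAB_fin (hgain z)))
    _ = _ := by ring

namespace IsIteratedPolarization

variable {A B : Set V}

theorem volume_eq (h : IsIteratedPolarization A B) (hA : MeasurableSet A) :
    volume B = volume A := by
  induction h with
  | refl => rfl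
  | tail h hz ih =>
    obtain ⟨z, rfl⟩ := hz
    rw [volume_polarization (measurableSet h hA), ih]

theorem nonlocalPerimeter_le (h : IsIteratedPolarization A B) (hA : MeasurableSet A)
    {k : ℝ≥0∞ → ℝ≥0∞} (hk : Antitone k) : nonlocalPerimeter k B ≤ nonlocalPerimeter k A := by
  induction h with
  | refl => rfl
  | tail h hz ih =>
    obtain ⟨z, rfl⟩ := hz
    exact (nonlocalPerimeter_polarization_le hk (measurableSet h hA) z).trans ih

theorem volume_sdiff_ball_le (h : IsIteratedPolarization A B) (hA : MeasurableSet A) (r : ℝ) :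
    volume (B \ Metric.ball 0 r) ≤ volume (A \ Metric.ball 0 r) := by
  induction h with
  | refl => rfl
  | tail h hz ih =>
    obtain ⟨z, rfl⟩ := hz
    exact (le_self_add.trans (volume_polarization_sdiff_ball_add_le (measurableSet h hA) z r)).trans
      ih

theorem exists_volume_sdiff_ball_lt (hA : MeasurableSet A) {r : ℝ} (hr : 0 < r)
    (hvol : volume A = volume (Metric.ball (0 : V) r)) {ε : ℝ≥0∞} (hε : ε ≠ 0) :
    ∃ B, IsIteratedPolarization A B ∧ volume (B \ Metric.ball 0 r) < ε := by
  by_contra! hfar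
  have hfin : volume A ≠ ⊤ := hvol ▸ measure_ball_lt_top.ne
  obtain ⟨M, -, hM⟩ := exists_measure_sdiff_ball_le (ε := ε / 2) hA hfin
    (ENNReal.div_ne_zero.2 ⟨hε, ENNReal.ofNat_ne_top⟩) r
  obtain ⟨η, hη, hgain⟩ := exists_polarization_gain (V := V) (M := M) hr hε
  set m := ⨅ B, ⨅ _ : IsIteratedPolarization A B, volume (B \ Metric.ball 0 r) with hm
  have hm_fin : m ≠ ⊤ := ne_top_of_le_ne_top (measure_ne_top_of_subset Set.sdiff_subset hfin)
    (iInf₂_le A Relation.ReflTransGen.refl)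
  obtain ⟨B, hB, hlt⟩ : ∃ B, IsIteratedPolarization A B ∧ volume (B \ Metric.ball 0 r) < m + η := by
    simpa only [hm, iInf_lt_iff, exists_prop] using ENNReal.lt_add_right hm_fin hη
  obtain ⟨z, hz⟩ := hgain B (hB.measurableSet hA) ((hB.volume_eq hA).trans hvol) (hfar B hB)
    ((hB.volume_sdiff_ball_le hA M).trans hM)
  have hm_le : m ≤ volume (polarization z B \ Metric.ball 0 r) :=
    iInf₂_le _ (Relation.ReflTransGen.tail hB ⟨z, rfl⟩)
  exact hlt.not_ge ((add_le_add_left hm_le η).trans hz)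

end IsIteratedPolarization

theorem ae_tendsto_indicator_of_tsum_measure_symmDiff_ne_top {X : Type*} [MeasurableSpace X]
    {μ : Measure X} {A : ℕ → Set X} {B : Set X} (h : ∑' n, μ (symmDiff (A n) B) ≠ ⊤) :
    ∀ᵐ x ∂μ, Tendsto (fun n => (A n).indicator (1 : X → ℝ) x) atTop (𝓝 (B.indicator 1 x)) := by
  classical
  filter_upwards [ae_eventually_notMem h] with x hx
  refine tendsto_const_nhds.congr' ?_
  filter_upwards [hx] with n hn
  rw [Set.mem_symmDiff] at hn
  simp only [Set.indicator_apply]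
  congr 1
  exact propext (by tauto)

theorem nonlocalPerimeter_ball_le {k : ℝ≥0∞ → ℝ≥0∞} (hk : Antitone k) {A : Set V}
    (hA : MeasurableSet A) {r : ℝ} (hr : 0 < r)
    (hvol : volume A = volume (Metric.ball (0 : V) r)) :
    nonlocalPerimeter k (Metric.ball (0 : V) r) ≤ nonlocalPerimeter k A := by
  choose B hAB hB using fun n : ℕ =>
    IsIteratedPolarization.exists_volume_sdiff_ball_lt hA hr hvol (ε := (2⁻¹ : ℝ≥0∞) ^ n)
      (pow_ne_zero n (by simp))
  have hBm (n : ℕ) : MeasurableSet (B n) := (hAB n).measurableSet hA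
  have sdiff_symm (n : ℕ) :
      volume (Metric.ball 0 r \ B n) = volume (B n \ Metric.ball 0 r) :=
    measure_sdiff_symm measurableSet_ball.nullMeasurableSet (hBm n).nullMeasurableSet
      (((hAB n).volume_eq hA).trans hvol).symm
      (measure_ne_top_of_subset Set.inter_subset_left measure_ball_lt_top.ne)
  have hsum : ∑' n, volume (symmDiff (B n) (Metric.ball 0 r)) ≠ ⊤ := by
    refine ne_top_of_le_ne_top (b := ∑' n : ℕ, 2 * (2⁻¹ : ℝ≥0∞) ^ n) ?_
      (ENNReal.tsum_le_tsum fun n => ?_)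
    · rw [ENNReal.tsum_mul_left, ENNReal.tsum_geometric]
      simp [ENNReal.mul_eq_top]
    · rw [measure_symmDiff_eq (hBm n).nullMeasurableSet measurableSet_ball.nullMeasurableSet,
        sdiff_symm, ← two_mul]
      gcongr
      exact (hB n).le
  calc nonlocalPerimeter k (Metric.ball (0 : V) r)
      ≤ liminf (fun n => nonlocalPerimeter k (B n)) atTop :=
        nonlocalVariation_le_liminf_of_tendsto hk.measurable
          (fun n => measurable_one.indicator (hBm n))
          (ae_tendsto_indicator_of_tsum_measure_symmDiff_ne_top hsum)
    _ ≤ nonlocalPerimeter k A :=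
        liminf_le_of_le (by isBoundedDefault) fun b hb =>
          let ⟨n, hn⟩ := hb.exists
          hn.trans ((hAB n).nonlocalPerimeter_le hA hk)

end Isoperimetry

section LayerCake

variable {X : Type*} [MeasurableSpace X] {μ : Measure X} {p : ℝ} {g : X → ℝ≥0}

theorem lintegral_coe_eq_lintegral_meas_lt (μ : Measure X) (hg : Measurable g) :
    ∫⁻ x, g x ∂μ = ∫⁻ t in Set.Ioi (0 : ℝ), μ {x | t < g x} := by
  simpa using lintegral_eq_lintegral_meas_lt μ (ae_of_all _ fun x => (g x).coe_nonneg)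
    hg.coe_nnreal_real.aemeasurable

theorem setLIntegral_le_measure_rpow_mul_lintegral_rpow {q : ℝ} (hpq : p.HolderConjugate q)
    {f : X → ℝ≥0∞} (hf : Measurable f) (S : Set X) :
    ∫⁻ x in S, f x ∂μ ≤ μ S ^ (1 / p) * (∫⁻ x, f x ^ q ∂μ) ^ (1 / q) := by
  have hölder := ENNReal.lintegral_mul_le_Lp_mul_Lq (μ.restrict S) hpq (f := 1) aemeasurable_const
    hf.aemeasurable
  simp only [one_mul, Pi.one_apply, ENNReal.one_rpow, lintegral_one,
    Measure.restrict_apply_univ] at hölder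
  refine hölder.trans ?_
  gcongr
  · exact one_div_nonneg.2 hpq.symm.nonneg
  · exact Measure.restrict_le_self

-- `∫ g ^ p = ∫ g dν` with `dν = g ^ (p - 1) dμ`; apply the layer cake formula to `ν` and bound
-- `ν {g > t}` by Hölder's inequality.
theorem lintegral_rpow_le_lintegral_measure_rpow_of_ne_top (hp : 1 < p) (hg : Measurable g)
    (hfin : ∫⁻ x, (g x : ℝ≥0∞) ^ p ∂μ ≠ ⊤) :
    (∫⁻ x, (g x : ℝ≥0∞) ^ p ∂μ) ^ (1 / p) ≤
      ∫⁻ t in Set.Ioi (0 : ℝ), μ {x | t < g x} ^ (1 / p) := by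
  have hpq := Real.HolderConjugate.conjExponent hp
  set q := Real.conjExponent p
  set I := ∫⁻ x, (g x : ℝ≥0∞) ^ p ∂μ with hI
  rcases eq_or_ne I 0 with hI0 | hI0
  · rw [hI0, ENNReal.zero_rpow_of_pos (one_div_pos.2 hpq.pos)]
    exact zero_le
  have weight_measurable : Measurable fun x => (g x : ℝ≥0∞) ^ (p - 1) :=
    hg.coe_nnreal_ennreal.pow_const _
  have hI_ne_top : I ^ (1 / q) ≠ ⊤ :=
    ENNReal.rpow_ne_top_of_nonneg (one_div_nonneg.2 hpq.symm.nonneg) hfin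
  have hI_ne_zero : I ^ (1 / q) ≠ 0 := by simp [ENNReal.rpow_eq_zero_iff, hI0, hfin]
  refine (ENNReal.mul_le_mul_iff_left hI_ne_zero hI_ne_top).1 ?_
  calc I ^ (1 / p) * I ^ (1 / q)
      = ∫⁻ x, (g x : ℝ≥0∞) ^ (p - 1) * g x ∂μ := by
        rw [← ENNReal.rpow_add _ _ hI0 hfin, one_div, one_div, hpq.inv_add_inv_eq_one,
          ENNReal.rpow_one, hI]
        refine lintegral_congr fun x => ?_
        nth_rw 3 [← ENNReal.rpow_one (g x : ℝ≥0∞)]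
        rw [← ENNReal.rpow_add_of_nonneg _ _ hpq.sub_one_pos.le zero_le_one, sub_add_cancel]
    _ = ∫⁻ t in Set.Ioi (0 : ℝ), ∫⁻ x in {x | t < g x}, (g x : ℝ≥0∞) ^ (p - 1) ∂μ := by
        have density := lintegral_coe_eq_lintegral_meas_lt
          (μ.withDensity fun x => (g x : ℝ≥0∞) ^ (p - 1)) hg
        rw [lintegral_withDensity_eq_lintegral_mul _ weight_measurable
          hg.coe_nnreal_ennreal] at density
        refine density.trans (lintegral_congr fun t => ?_)
        exact withDensity_apply _ (measurableSet_lt measurable_const hg.coe_nnreal_real)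
    _ ≤ ∫⁻ t in Set.Ioi (0 : ℝ), μ {x | t < g x} ^ (1 / p) * I ^ (1 / q) := by
        refine lintegral_mono fun t => ?_
        simpa only [← ENNReal.rpow_mul, hpq.sub_one_mul_conj] using
          setLIntegral_le_measure_rpow_mul_lintegral_rpow (μ := μ) hpq weight_measurable
            {x | t < g x}
    _ = _ := lintegral_mul_const' _ _ hI_ne_top

theorem lintegral_rpow_le_lintegral_measure_rpow [SigmaFinite μ] (hp : 1 < p) (g : X → ℝ≥0) :
    (∫⁻ x, (g x : ℝ≥0∞) ^ p ∂μ) ^ (1 / p) ≤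
      ∫⁻ t in Set.Ioi (0 : ℝ), μ {x | t < g x} ^ (1 / p) := by
  have hp0 : 0 < p := zero_lt_one.trans hp
  rw [one_div, ENNReal.rpow_inv_le_iff hp0]
  refine le_of_forall_lt fun L hL => ?_
  simp_rw [← ENNReal.coe_rpow_of_nonneg _ hp0.le] at hL
  obtain ⟨φ, hφ_le, hφ_fin, hLφ⟩ := exists_lt_lintegral_simpleFunc_of_lt_lintegral hL
  have hφ (x : X) : ((φ x ^ p⁻¹ : ℝ≥0) : ℝ≥0∞) ^ p = φ x := by
    rw [← ENNReal.coe_rpow_of_nonneg _ hp0.le, ← NNReal.rpow_mul, inv_mul_cancel₀ hp0.ne',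
      NNReal.rpow_one]
  have root_le (x : X) : φ x ^ p⁻¹ ≤ g x := (NNReal.rpow_inv_le_iff hp0).2 (hφ_le x)
  have hφ_bound := lintegral_rpow_le_lintegral_measure_rpow_of_ne_top (μ := μ) hp
    (φ.measurable.pow_const p⁻¹) (by simpa only [hφ] using hφ_fin.ne)
  simp only [hφ, one_div] at hφ_bound
  refine hLφ.trans_le ((ENNReal.rpow_inv_le_iff hp0).1 (hφ_bound.trans ?_))
  gcongr with t x
  exact root_le x

theorem eLpNorm'_le_lintegral_measure_rpow [SigmaFinite μ] (hp : 1 < p) (u : X → ℝ) :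
    eLpNorm' u p μ ≤ ∫⁻ t in Set.Ioi (0 : ℝ), μ {x | t < |u x|} ^ (1 / p) :=
  lintegral_rpow_le_lintegral_measure_rpow hp fun x => ‖u x‖₊

end LayerCake

section FractionalPerimeter

theorem lintegral_eq_mul_lintegral_comp_add_smul {V : Type*} [NormedAddCommGroup V]
    [NormedSpace ℝ V] [FiniteDimensional ℝ V] [MeasurableSpace V] [BorelSpace V] (μ : Measure V)
    [μ.IsAddHaarMeasure] {r : ℝ} (hr : 0 < r) (c : V) (f : V → ℝ≥0∞) :
    ∫⁻ x, f x ∂μ = ENNReal.ofReal (r ^ Module.finrank ℝ V) * ∫⁻ x, f (c + r • x) ∂μ := by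
  have hpow : 0 < r ^ Module.finrank ℝ V := pow_pos hr _
  have change_of_variables : ∫⁻ x, f (c + r • x) ∂μ =
      ENNReal.ofReal (r ^ Module.finrank ℝ V)⁻¹ * ∫⁻ x, f (c + x) ∂μ := by
    rw [← smul_eq_mul, ← abs_of_pos (inv_pos.2 hpow), ← lintegral_smul_measure,
      ← Measure.map_addHaar_smul μ hr.ne']
    exact ((Homeomorph.smulOfNeZero r hr.ne').measurableEmbedding.lintegral_map
      (fun x => f (c + x))).symm
  rw [change_of_variables, ← mul_assoc, ← ENNReal.ofReal_mul hpow.le, mul_inv_cancel₀ hpow.ne',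
    ENNReal.ofReal_one, one_mul, lintegral_add_left_eq_self]

variable (V : Type*) [NormedAddCommGroup V] [InnerProductSpace ℝ V]

/-- The kernel `r ^ (-(N + s))` of the Gagliardo seminorm `[u]_{s,1}` on an `N`-dimensional space
`V`; its nonlocal perimeter is the `s`-fractional perimeter. -/
def gagliardoKernel (s : ℝ) (r : ℝ≥0∞) : ℝ≥0∞ := r ^ (-(Module.finrank ℝ V + s))

theorem antitone_gagliardoKernel {s : ℝ} (hs : 0 ≤ Module.finrank ℝ V + s) :
    Antitone (gagliardoKernel V s) := fun a b hab => by
  simp only [gagliardoKernel, ENNReal.rpow_neg]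
  gcongr

theorem gagliardoKernel_mul (s : ℝ) {r : ℝ} (hr : 0 < r) {t : ℝ≥0∞} (ht : t ≠ ⊤) :
    gagliardoKernel V s (ENNReal.ofReal r * t) =
      ENNReal.ofReal (r ^ (-(Module.finrank ℝ V + s))) * gagliardoKernel V s t := by
  rw [gagliardoKernel, ENNReal.mul_rpow_of_ne_top ENNReal.ofReal_ne_top ht,
    ENNReal.ofReal_rpow_of_pos hr, gagliardoKernel]

variable [FiniteDimensional ℝ V] [MeasurableSpace V] [BorelSpace V]

/-- The isoperimetric quotient `P_s(B) / |B| ^ ((N - s) / N)` of the unit ball `B` for the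
`s`-fractional perimeter `P_s`. -/
def isoperimetricConstant (s : ℝ) : ℝ≥0∞ :=
  nonlocalPerimeter (gagliardoKernel V s) (Metric.ball (0 : V) 1) /
    volume (Metric.ball (0 : V) 1) ^ ((Module.finrank ℝ V - s) / Module.finrank ℝ V)

variable {V}

theorem nonlocalPerimeter_gagliardoKernel_ball_eq_mul (s : ℝ) (c : V) {r : ℝ} (hr : 0 < r) :
    nonlocalPerimeter (gagliardoKernel V s) (Metric.ball c r) =
      ENNReal.ofReal (r ^ (Module.finrank ℝ V - s)) *
        nonlocalPerimeter (gagliardoKernel V s) (Metric.ball (0 : V) 1) := by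
  set d := Module.finrank ℝ V
  have mem_ball_iff (x : V) : c + r • x ∈ Metric.ball c r ↔ x ∈ Metric.ball (0 : V) 1 := by
    rw [mem_ball_iff_norm, add_sub_cancel_left, norm_smul, Real.norm_of_nonneg hr.le,
      mul_lt_iff_lt_one_right hr, mem_ball_zero_iff]
  have indicator_comp (x : V) : (Metric.ball c r).indicator (1 : V → ℝ) (c + r • x) =
      (Metric.ball 0 1).indicator 1 x := by
    classical
    simp only [Set.indicator_apply, Pi.one_apply, if_congr (mem_ball_iff x) rfl rfl]
  have edist_comp (x y : V) : edist (c + r • x) (c + r • y) = ENNReal.ofReal r * edist x y := by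
    rw [edist_add_left, edist_smul₀, ENNReal.smul_def, smul_eq_mul, ← enorm_eq_nnnorm,
      Real.enorm_of_nonneg hr.le]
  have exponent : r ^ (d - s) = r ^ d * r ^ d * r ^ (-(d + s)) := by
    rw [← Real.rpow_natCast, ← Real.rpow_add hr, ← Real.rpow_add hr]
    ring_nf
  simp only [nonlocalPerimeter, nonlocalVariation]
  rw [lintegral_eq_mul_lintegral_comp_add_smul volume hr c, exponent,
    ENNReal.ofReal_mul (by positivity), ENNReal.ofReal_mul (by positivity), mul_assoc, mul_assoc]
  congr 1
  simp_rw [← lintegral_const_mul' _ _ ENNReal.ofReal_ne_top]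
  refine lintegral_congr fun x => ?_
  rw [lintegral_eq_mul_lintegral_comp_add_smul volume hr c,
    ← lintegral_const_mul' _ _ ENNReal.ofReal_ne_top]
  refine lintegral_congr fun y => ?_
  rw [indicator_comp, indicator_comp, edist_comp, gagliardoKernel_mul V s hr (edist_ne_top x y)]
  ring

variable [Nontrivial V]

theorem nonlocalPerimeter_gagliardoKernel_ball (s : ℝ) (c : V) {r : ℝ} (hr : 0 < r) :
    nonlocalPerimeter (gagliardoKernel V s) (Metric.ball c r) =
      isoperimetricConstant V s * volume (Metric.ball c r) ^
        ((Module.finrank ℝ V - s) / Module.finrank ℝ V) := by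
  have hd : (Module.finrank ℝ V : ℝ) ≠ 0 := Nat.cast_ne_zero.2 Module.finrank_pos.ne'
  have hball : volume (Metric.ball (0 : V) 1) ≠ 0 := (Metric.measure_ball_pos _ _ one_pos).ne'
  rw [nonlocalPerimeter_gagliardoKernel_ball_eq_mul s c hr, Measure.addHaar_ball_of_pos _ _ hr,
    ENNReal.mul_rpow_of_ne_zero (by simpa using pow_pos hr _) hball,
    ENNReal.ofReal_rpow_of_pos (pow_pos hr _), ← Real.rpow_natCast_mul hr.le, mul_div_cancel₀ _ hd,
    mul_left_comm, isoperimetricConstant, ENNReal.div_mul_cancel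
      (ENNReal.rpow_pos hball.bot_lt measure_ball_lt_top.ne).ne'
      (ENNReal.rpow_ne_top_of_ne_zero hball measure_ball_lt_top.ne)]

theorem exists_volume_ball_eq {v : ℝ≥0∞} (hv₀ : v ≠ 0) (hv : v ≠ ⊤) :
    ∃ r > 0, volume (Metric.ball (0 : V) r) = v := by
  have hball : volume (Metric.ball (0 : V) 1) ≠ 0 := (Metric.measure_ball_pos _ _ one_pos).ne'
  have hball_fin : volume (Metric.ball (0 : V) 1) ≠ ⊤ := measure_ball_lt_top.ne
  set ratio := (v / volume (Metric.ball (0 : V) 1)).toReal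
  have hratio : 0 < ratio := ENNReal.toReal_pos (ENNReal.div_ne_zero.2 ⟨hv₀, hball_fin⟩)
    (ENNReal.div_ne_top hv hball)
  refine ⟨ratio ^ (Module.finrank ℝ V : ℝ)⁻¹, Real.rpow_pos_of_pos hratio _, ?_⟩
  rw [Measure.addHaar_ball_of_pos _ _ (Real.rpow_pos_of_pos hratio _),
    Real.rpow_inv_natCast_pow hratio.le Module.finrank_pos.ne',
    ENNReal.ofReal_toReal (ENNReal.div_ne_top hv hball), ENNReal.div_mul_cancel hball hball_fin]

theorem isoperimetricConstant_mul_volume_rpow_le {s : ℝ} (hs : 0 ≤ Module.finrank ℝ V + s)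
    (hsd : s < Module.finrank ℝ V) {A : Set V} (hA : MeasurableSet A) (hfin : volume A ≠ ⊤) :
    isoperimetricConstant V s * volume A ^ ((Module.finrank ℝ V - s) / Module.finrank ℝ V) ≤
      nonlocalPerimeter (gagliardoKernel V s) A := by
  rcases eq_or_ne (volume A) 0 with h0 | h0
  · have hd : (0 : ℝ) < Module.finrank ℝ V := Nat.cast_pos.2 Module.finrank_pos
    rw [h0, ENNReal.zero_rpow_of_pos (div_pos (sub_pos.2 hsd) hd), mul_zero]
    exact zero_le
  · obtain ⟨r, hr, hvol⟩ := exists_volume_ball_eq (V := V) h0 hfin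
    rw [← hvol, ← nonlocalPerimeter_gagliardoKernel_ball s 0 hr]
    exact nonlocalPerimeter_ball_le (antitone_gagliardoKernel V hs) hA hr hvol.symm

theorem isoperimetricConstant_mul_eLpNorm'_le {s : ℝ} (hs0 : 0 < s)
    (hsd : s < Module.finrank ℝ V) {u : V → ℝ} (hu : AEStronglyMeasurable u)
    (hfin : ∀ t > 0, volume {x | t < |u x|} ≠ ⊤) :
    isoperimetricConstant V s *
        eLpNorm' u (Module.finrank ℝ V / (Module.finrank ℝ V - s)) volume ≤
      nonlocalVariation (gagliardoKernel V s) u := by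
  wlog hmeas : Measurable u generalizing u
  · have hae := hu.ae_eq_mk
    rw [eLpNorm'_congr_ae hae, nonlocalVariation_congr_ae hae]
    refine this hu.stronglyMeasurable_mk.aestronglyMeasurable (fun t ht => ?_)
      hu.stronglyMeasurable_mk.measurable
    rw [← measure_congr (hae.mono fun x hx => ?_)]
    · exact hfin t ht
    · exact congrArg (t < |·|) hx
  have hk : Measurable (gagliardoKernel V s) :=
    (antitone_gagliardoKernel V (by linarith)).measurable
  have hp : 1 < (Module.finrank ℝ V : ℝ) / (Module.finrank ℝ V - s) := by
    rw [one_lt_div (sub_pos.2 hsd)]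
    linarith
  calc isoperimetricConstant V s *
        eLpNorm' u (Module.finrank ℝ V / (Module.finrank ℝ V - s)) volume
      ≤ isoperimetricConstant V s * ∫⁻ t in Set.Ioi (0 : ℝ), volume {x | t < |u x|} ^
          ((Module.finrank ℝ V - s) / Module.finrank ℝ V) := by
        gcongr
        simpa only [one_div_div] using eLpNorm'_le_lintegral_measure_rpow hp u
    _ ≤ ∫⁻ t in Set.Ioi (0 : ℝ), isoperimetricConstant V s * volume {x | t < |u x|} ^
          ((Module.finrank ℝ V - s) / Module.finrank ℝ V) := lintegral_const_mul_le _ _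
    _ ≤ ∫⁻ t in Set.Ioi (0 : ℝ), nonlocalPerimeter (gagliardoKernel V s) {x | t < |u x|} :=
        setLIntegral_mono' measurableSet_Ioi fun t ht =>
          isoperimetricConstant_mul_volume_rpow_le (by linarith) hsd
            (measurableSet_lt measurable_const hmeas.abs) (hfin t ht)
    _ ≤ ∫⁻ t : ℝ, nonlocalPerimeter (gagliardoKernel V s) {x | t < |u x|} :=
        setLIntegral_le_lintegral _ _
    _ = nonlocalVariation (gagliardoKernel V s) (fun x => |u x|) :=
        (nonlocalVariation_eq_lintegral_nonlocalPerimeter hk hmeas.abs).symm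
    _ ≤ _ := nonlocalVariation_abs_le

end FractionalPerimeter

section FinitePerimeter

theorem lintegral_lintegral_indicator_mul_sub {G : Type*} [MeasurableSpace G] [AddGroup G]
    [MeasurableAdd G] [MeasurableNeg G] [MeasurableSub G] {μ : Measure G} [μ.IsAddLeftInvariant]
    [μ.IsNegInvariant] {S : Set G} (hS : MeasurableSet S) {f : G → ℝ≥0∞} (hf : Measurable f) :
    ∫⁻ x, ∫⁻ y, S.indicator 1 x * f (x - y) ∂μ ∂μ = μ S * ∫⁻ z, f z ∂μ := by
  have inner (x : G) :
      ∫⁻ y, S.indicator 1 x * f (x - y) ∂μ = S.indicator 1 x * ∫⁻ z, f z ∂μ := by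
    rw [lintegral_const_mul _ (f := fun y => f (x - y)) (by fun_prop), lintegral_sub_left_eq_self f]
  simp_rw [inner]
  rw [lintegral_mul_const _ (measurable_one.indicator hS), lintegral_indicator_one hS]

theorem nonlocalVariation_le_of_lipschitzWith {X : Type*} [NormedAddCommGroup X]
    [MeasureSpace X] [BorelSpace X] [SecondCountableTopology X] [SFinite (volume : Measure X)]
    [(volume : Measure X).IsAddLeftInvariant] [(volume : Measure X).IsNegInvariant]
    {k : ℝ≥0∞ → ℝ≥0∞} (hk : Measurable k) {u : X → ℝ} (hu : LipschitzWith 1 u)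
    (hu01 : ∀ x, u x ∈ Set.Icc 0 1) {S : Set X} (hS : MeasurableSet S)
    (hsupp : Function.support u ⊆ S) :
    nonlocalVariation k u ≤ 2 * (volume S * ∫⁻ z : X, min 1 ‖z‖ₑ * k ‖z‖ₑ) := by
  set m : X → ℝ≥0∞ := fun z => min 1 ‖z‖ₑ * k ‖z‖ₑ
  have m_measurable : Measurable m :=
    (measurable_const.min measurable_enorm).mul (hk.comp measurable_enorm)
  have diff_le (x y : X) : ‖u x - u y‖ₑ * k (edist x y) ≤ m (x - y) := by
    rw [edist_eq_enorm_sub]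
    refine mul_le_mul_left (le_min ?_ ?_) _
    · rw [Real.enorm_eq_ofReal_abs, ENNReal.ofReal_le_one]
      exact abs_sub_le_of_nonneg_of_le (hu01 x).1 (hu01 x).2 (hu01 y).1 (hu01 y).2
    · simpa only [edist_eq_enorm_sub, ENNReal.coe_one, one_mul] using hu x y
  have integrand_le (x y : X) : ‖u x - u y‖ₑ * k (edist x y) ≤
      S.indicator 1 x * m (x - y) + S.indicator 1 y * m (y - x) := by
    by_cases hx : x ∈ S
    · exact le_add_right (by simpa [hx] using diff_le x y)
    by_cases hy : y ∈ S
    · rw [edist_comm, enorm_sub_rev]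
      exact le_add_left (by simpa [hy] using diff_le y x)
    · simp [Function.notMem_support.1 fun h => hx (hsupp h),
        Function.notMem_support.1 fun h => hy (hsupp h)]
  have pair_measurable : Measurable fun p : X × X => S.indicator 1 p.1 * m (p.1 - p.2) :=
    ((measurable_one.indicator hS).comp measurable_fst).mul (m_measurable.comp measurable_sub)
  calc nonlocalVariation k u
      ≤ ∫⁻ x, ∫⁻ y, (S.indicator 1 x * m (x - y) + S.indicator 1 y * m (y - x)) :=
        lintegral_mono fun x => lintegral_mono fun y => integrand_le x y
    _ = (∫⁻ x, ∫⁻ y, S.indicator 1 x * m (x - y)) + ∫⁻ x, ∫⁻ y, S.indicator 1 y * m (y - x) := by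
        rw [← lintegral_add_left pair_measurable.lintegral_prod_right']
        exact lintegral_congr fun x =>
          lintegral_add_left (pair_measurable.comp measurable_prodMk_left) _
    _ = 2 * ∫⁻ x, ∫⁻ y, S.indicator 1 x * m (x - y) := by
        rw [two_mul, lintegral_lintegral_swap pair_measurable.aemeasurable]
    _ = _ := by rw [lintegral_lintegral_indicator_mul_sub hS m_measurable]

variable {V : Type*} [NormedAddCommGroup V] [InnerProductSpace ℝ V] [FiniteDimensional ℝ V]
  [MeasurableSpace V] [BorelSpace V] [Nontrivial V]

theorem lintegral_min_one_mul_gagliardoKernel_ne_top {s : ℝ} (hs0 : 0 < s)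
    (hs1 : s < 1) : ∫⁻ z : V, min 1 ‖z‖ₑ * gagliardoKernel V s ‖z‖ₑ ≠ ⊤ := by
  set d := Module.finrank ℝ V
  have radial_integrable :
      IntegrableOn (fun r : ℝ => r ^ (d - 1) • (min 1 r * r ^ (-(d + s)))) (Set.Ioi 0) := by
    have near : IntegrableOn (fun r : ℝ => r ^ (-s)) (Set.Ioc 0 1) :=
      (intervalIntegrable_iff_integrableOn_Ioc_of_le zero_le_one).1
        (intervalIntegral.intervalIntegrable_rpow' (by linarith))
    have far : IntegrableOn (fun r : ℝ => r ^ (-s - 1)) (Set.Ioi 1) :=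
      integrableOn_Ioi_rpow_of_lt (by linarith) one_pos
    have density {r : ℝ} (hr : 0 < r) : r ^ (d - 1) * r ^ (-(d + s)) = r ^ (-s - 1) := by
      rw [← Real.rpow_natCast, Nat.cast_pred (show 0 < d from Module.finrank_pos),
        ← Real.rpow_add hr]
      ring_nf
    rw [← Set.Ioc_union_Ioi_eq_Ioi zero_le_one]
    refine .union (near.congr_fun (fun r hr => ?_) measurableSet_Ioc)
      (far.congr_fun (fun r hr => ?_) measurableSet_Ioi)
    · rw [smul_eq_mul, min_eq_right hr.2, mul_left_comm, density hr.1, mul_comm,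
        ← Real.rpow_add_one hr.1.ne', sub_add_cancel]
    · rw [smul_eq_mul, min_eq_left hr.le, one_mul, density (one_pos.trans hr)]
  have integrable : Integrable fun z : V => min 1 ‖z‖ * ‖z‖ ^ (-(d + s)) :=
    (integrable_fun_norm_addHaar volume).2 radial_integrable
  convert integrable.hasFiniteIntegral.ne using 3 with z
  rcases eq_or_ne z 0 with rfl | hz
  · simp
  · rw [enorm_mul, Real.enorm_of_nonneg (le_min zero_le_one (norm_nonneg z)),
      Real.enorm_of_nonneg (by positivity), ← ENNReal.ofReal_rpow_of_pos (norm_pos_iff.2 hz),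
      ENNReal.ofReal_min, ENNReal.ofReal_one, ofReal_norm, gagliardoKernel]

theorem isoperimetricConstant_ne_top {s : ℝ} (hs0 : 0 < s) (hs1 : s < 1) :
    isoperimetricConstant V s ≠ ⊤ := by
  intro htop
  have hk : Measurable (gagliardoKernel V s) :=
    (antitone_gagliardoKernel V (by positivity)).measurable
  set cone : V → ℝ := fun x => max (1 - ‖x‖) 0
  have cone_lipschitz : LipschitzWith 1 cone :=
    (LipschitzWith.of_le_add fun x y => by
      linarith [norm_le_norm_add_norm_sub' y x, dist_eq_norm x y, norm_sub_rev x y]).max_const 0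
  have cone_finite : nonlocalVariation (gagliardoKernel V s) cone ≠ ⊤ := by
    have cone_support : Function.support cone ⊆ Metric.ball 0 1 := by
      intro x hx
      contrapose! hx
      simpa [cone] using hx
    exact ne_top_of_le_ne_top (ENNReal.mul_ne_top ENNReal.ofNat_ne_top
      (ENNReal.mul_ne_top measure_ball_lt_top.ne
        (lintegral_min_one_mul_gagliardoKernel_ne_top hs0 hs1)))
      (nonlocalVariation_le_of_lipschitzWith hk cone_lipschitz
        (fun x => ⟨le_max_right _ _, max_le (sub_le_self _ (norm_nonneg x)) zero_le_one⟩)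
        measurableSet_ball cone_support)
  have superlevel (t : ℝ) (ht : t ∈ Set.Ioo (0 : ℝ) 1) :
      nonlocalPerimeter (gagliardoKernel V s) {x | t < cone x} = ⊤ := by
    have : {x | t < cone x} = Metric.ball 0 (1 - t) := by
      ext x
      simp only [Set.mem_ofPred_eq, cone, lt_max_iff, ht.1.not_gt, or_false, mem_ball_zero_iff,
        lt_sub_comm]
    rw [this, nonlocalPerimeter_gagliardoKernel_ball s 0 (sub_pos.2 ht.2), htop]
    exact ENNReal.top_mul (ENNReal.rpow_pos (Metric.measure_ball_pos _ _ (sub_pos.2 ht.2))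
      measure_ball_lt_top.ne).ne'
  apply cone_finite
  rw [nonlocalVariation_eq_lintegral_nonlocalPerimeter hk cone_lipschitz.continuous.measurable,
    eq_top_iff]
  calc ⊤ = ∫⁻ _ in Set.Ioo (0 : ℝ) 1, ⊤ := by simp
    _ = ∫⁻ t in Set.Ioo (0 : ℝ) 1, nonlocalPerimeter (gagliardoKernel V s) {x | t < cone x} :=
        setLIntegral_congr_fun measurableSet_Ioo fun t ht => (superlevel t ht).symm
    _ ≤ _ := setLIntegral_le_lintegral _ _

end FinitePerimeter

section EuclideanSpace

variable {N : ℕ} {s q : ℝ}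

theorem gagE_eq_nonlocalVariation (u : Rn N → ℝ) :
    gagE N s u = nonlocalVariation (gagliardoKernel (Rn N) s) u := by
  refine lintegral_congr fun x => lintegral_congr fun y => ?_
  rcases eq_or_ne x y with rfl | hxy
  · simp
  · have hdist : 0 < dist x y := dist_pos.2 hxy
    rw [gagliardoKernel, finrank_euclideanSpace_fin, edist_dist, ENNReal.ofReal_rpow_of_pos hdist,
      Real.enorm_eq_ofReal_abs, ← ENNReal.ofReal_mul (abs_nonneg _), Real.rpow_neg hdist.le,
      div_eq_mul_inv]

theorem Lq_eq_toReal_eLpNorm' (hq : 0 < q) {u : Rn N → ℝ} (hu : AEStronglyMeasurable u) :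
    Lq N q u = (eLpNorm' u q volume).toReal := by
  rw [Lq, eLpNorm'_eq_lintegral_enorm, ← ENNReal.toReal_rpow, integral_eq_lintegral_of_nonneg_ae
    (.of_forall fun _ => Real.rpow_nonneg (abs_nonneg _) q)
    (hu.aemeasurable.abs.pow_const q).aestronglyMeasurable]
  simp_rw [Real.enorm_eq_ofReal_abs, ENNReal.ofReal_rpow_of_nonneg (abs_nonneg _) hq.le]

theorem Lq_nonneg (u : Rn N → ℝ) : 0 ≤ Lq N q u :=
  Real.rpow_nonneg (integral_nonneg fun _ => Real.rpow_nonneg (abs_nonneg _) q) _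

theorem Lq_indicator_one (hq : 0 < q) {A : Set (Rn N)} (hA : MeasurableSet A) :
    Lq N q (A.indicator 1) = volume.real A ^ (1 / q) := by
  have power (x : Rn N) : |A.indicator (1 : Rn N → ℝ) x| ^ q = A.indicator 1 x := by
    by_cases hx : x ∈ A <;> simp [hx, Real.zero_rpow hq.ne']
  simp_rw [Lq, power]
  rw [integral_indicator_one hA]

theorem nontriv_indicator_ball (x : Rn N) {R : ℝ} (hR : 0 < R) :
    nontriv N ((Metric.ball x R).indicator 1) := by
  intro h
  have hball : volume (Metric.ball x R) = 0 :=
    measure_mono_null (fun y hy => by simpa using hy) (ae_iff.1 h)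
  exact (Metric.measure_ball_pos volume x hR).ne' hball

theorem omegaN_pos (N : ℕ) : 0 < omegaN N :=
  div_pos (Real.rpow_pos_of_pos Real.pi_pos _) (Real.Gamma_pos_of_pos (by positivity))

variable [NeZero N]

theorem volume_real_ball (x : Rn N) {R : ℝ} (hR : 0 < R) :
    volume.real (Metric.ball x R) = omegaN N * R ^ (N : ℝ) := by
  rw [measureReal_def, EuclideanSpace.volume_ball, ENNReal.toReal_mul, Fintype.card_fin,
    ← ENNReal.ofReal_pow hR.le, ENNReal.toReal_ofReal (by positivity),
    ENNReal.toReal_ofReal (by positivity), omegaN, Real.sqrt_eq_rpow,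
    ← Real.rpow_mul_natCast Real.pi_pos.le, one_div_mul_eq_div, Real.rpow_natCast, mul_comm]

theorem gagE_indicator_ball (x : Rn N) {R : ℝ} (hR : 0 < R) :
    gagE N s ((Metric.ball x R).indicator 1) =
      isoperimetricConstant (Rn N) s * volume (Metric.ball x R) ^ (((N : ℝ) - s) / N) := by
  simpa only [finrank_euclideanSpace_fin, gagE_eq_nonlocalVariation, nonlocalPerimeter] using
    nonlocalPerimeter_gagliardoKernel_ball s x hR

theorem memW_indicator_ball (hs0 : 0 < s) (hs1 : s < 1) (x : Rn N) {R : ℝ} (hR : 0 < R) :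
    memW N s ((Metric.ball x R).indicator 1) := by
  refine ⟨(integrable_indicator_iff measurableSet_ball).2
    (integrableOn_const measure_ball_lt_top.ne), ?_⟩
  rw [gagE_indicator_ball x hR]
  exact ENNReal.mul_lt_top (isoperimetricConstant_ne_top hs0 hs1).lt_top
    (ENNReal.rpow_ne_top_of_ne_zero (Metric.measure_ball_pos _ _ hR).ne'
      measure_ball_lt_top.ne).lt_top

theorem isoperimetricConstant_le_Scrit (hs0 : 0 < s) (hs1 : s < 1) :
    (isoperimetricConstant (Rn N) s).toReal ≤ Scrit N s := by
  have hN : (1 : ℝ) ≤ N := Nat.one_le_cast.2 NeZero.one_le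
  have hsN : s < Module.finrank ℝ (Rn N) := by rw [finrank_euclideanSpace_fin]; linarith
  have hp : 0 < (N : ℝ) / (N - s) := div_pos (by linarith) (by linarith)
  refine le_csInf ⟨_, _, memW_indicator_ball hs0 hs1 0 one_pos,
    nontriv_indicator_ball 0 one_pos, rfl⟩ ?_
  rintro _ ⟨u, ⟨hu, hgag⟩, hnontriv, rfl⟩
  have sobolev := isoperimetricConstant_mul_eLpNorm'_le hs0 hsN hu.1 fun t ht =>
    (hu.measure_norm_gt_lt_top ht).ne
  rw [finrank_euclideanSpace_fin, ← gagE_eq_nonlocalVariation] at sobolev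
  rcases eq_or_ne (isoperimetricConstant (Rn N) s) 0 with hc | hc
  · rw [hc, ENNReal.toReal_zero]
    exact div_nonneg ENNReal.toReal_nonneg (Lq_nonneg u)
  have norm_ne_top : eLpNorm' u (N / (N - s)) volume ≠ ⊤ := fun htop => by
    rw [htop, ENNReal.mul_top hc] at sobolev
    exact hgag.not_ge sobolev
  have norm_ne_zero : eLpNorm' u (N / (N - s)) volume ≠ 0 :=
    mt (eLpNorm'_eq_zero_iff hp hu.1).1 hnontriv
  rw [Lq_eq_toReal_eLpNorm' hp hu.1, le_div_iff₀ (ENNReal.toReal_pos norm_ne_zero norm_ne_top),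
    ← ENNReal.toReal_mul]
  exact ENNReal.toReal_mono hgag.ne sobolev

theorem SDom_le_of_ball_subset (hs0 : 0 < s) (hs1 : s < 1) (hq : 0 < q) {Ω : Set (Rn N)}
    {x : Rn N} {R : ℝ} (hR : 0 < R) (hsub : Metric.ball x R ⊆ Ω) :
    SDom N s q Ω ≤ (isoperimetricConstant (Rn N) s).toReal *
      volume.real (Metric.ball x R) ^ (((N : ℝ) - s) / N - 1 / q) := by
  have hvol : 0 < volume.real (Metric.ball x R) :=
    ENNReal.toReal_pos (Metric.measure_ball_pos _ _ hR).ne' measure_ball_lt_top.ne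
  have bddBelow : BddBelow {r : ℝ | ∃ u : Rn N → ℝ, memW N s u ∧ (∀ᵐ x, x ∉ Ω → u x = 0) ∧
      nontriv N u ∧ r = gag N s u / Lq N q u} := by
    refine ⟨0, ?_⟩
    rintro _ ⟨u, -, -, -, rfl⟩
    exact div_nonneg ENNReal.toReal_nonneg (Lq_nonneg u)
  calc SDom N s q Ω
      ≤ gag N s ((Metric.ball x R).indicator 1) / Lq N q ((Metric.ball x R).indicator 1) :=
        csInf_le bddBelow ⟨_, memW_indicator_ball hs0 hs1 x hR,
          .of_forall fun y hy => Set.indicator_of_notMem (fun h => hy (hsub h)) _,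
          nontriv_indicator_ball x hR, rfl⟩
    _ = _ := by
        rw [gag, gagE_indicator_ball x hR, Lq_indicator_one hq measurableSet_ball,
          ENNReal.toReal_mul, ← ENNReal.toReal_rpow, ← measureReal_def, mul_div_assoc,
          Real.rpow_sub hvol]

theorem SDom_le_Scrit_mul_of_ball_subset (hs0 : 0 < s) (hs1 : s < 1) (hq : 0 < q)
    {Ω : Set (Rn N)} {x : Rn N} {R : ℝ} (hR : 0 < R) (hsub : Metric.ball x R ⊆ Ω) :
    SDom N s q Ω ≤
      Scrit N s * (omegaN N * R ^ (N : ℝ)) ^ (((N : ℝ) - s) / N - 1 / q) := by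
  rw [← volume_real_ball x hR]
  exact (SDom_le_of_ball_subset hs0 hs1 hq hR hsub).trans
    (mul_le_mul_of_nonneg_right (isoperimetricConstant_le_Scrit hs0 hs1) (by positivity))

end EuclideanSpace

theorem bddAbove_inscribed_radii {E : Type*} [NormedAddCommGroup E] [NormedSpace ℝ E]
    [Nontrivial E] {Ω : Set E} (hΩ : Bornology.IsBounded Ω) :
    BddAbove {R : ℝ | 0 < R ∧ ∃ x ∈ Ω, Metric.ball x R ⊆ Ω} := by
  refine ⟨Metric.diam Ω, ?_⟩
  rintro R ⟨-, x, hx, hsub⟩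
  refine le_of_forall_lt_imp_le_of_dense fun r hr => ?_
  rcases lt_or_ge r 0 with hr0 | hr0
  · exact hr0.le.trans Metric.diam_nonneg
  obtain ⟨y, rfl⟩ := exists_norm_eq E hr0
  calc ‖y‖ = dist (x + y) x := (dist_self_add_left y x).symm
    _ ≤ Metric.diam Ω := Metric.dist_le_diam_of_mem hΩ (hsub (by simpa using hr)) hx

theorem S_domain_upper_bound_general (N : ℕ) (hN : 1 ≤ N) (s : ℝ) (hs0 : 0 < s) (hs1 : s < 1)
    (Ω : Set (Rn N)) (hΩ : (interior Ω).Nonempty)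
    (hR : BddAbove {R : ℝ | 0 < R ∧ ∃ x ∈ Ω, Metric.ball x R ⊆ Ω}) (q : ℝ) (hq : 0 < q) :
    SDom N s q Ω ≤ Scrit N s *
      (omegaN N * inradius N Ω ^ (N : ℝ)) ^ (((N : ℝ) - s) / (N : ℝ) - 1 / q) := by
  have : NeZero N := ⟨by omega⟩
  obtain ⟨x₀, hx₀⟩ := hΩ
  obtain ⟨R₀, hR₀, hsub₀⟩ := Metric.mem_nhds_iff.1 (mem_interior_iff_mem_nhds.1 hx₀)
  have hmem₀ : R₀ ∈ {R : ℝ | 0 < R ∧ ∃ x ∈ Ω, Metric.ball x R ⊆ Ω} :=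
    ⟨hR₀, x₀, interior_subset hx₀, hsub₀⟩
  have inradius_pos : 0 < inradius N Ω := hR₀.trans_le (le_csSup hR hmem₀)
  have bound_continuousAt : ContinuousAt (fun R : ℝ => Scrit N s *
      (omegaN N * R ^ (N : ℝ)) ^ (((N : ℝ) - s) / N - 1 / q)) (inradius N Ω) :=
    continuousAt_const.mul ((continuousAt_const.mul
      (continuousAt_id.rpow_const (.inl inradius_pos.ne'))).rpow_const
        (.inl (mul_pos (omegaN_pos N) (Real.rpow_pos_of_pos inradius_pos N)).ne'))
  obtain ⟨R, -, hR_tendsto, hR_mem⟩ := exists_seq_tendsto_sSup ⟨R₀, hmem₀⟩ hR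
  refine ge_of_tendsto' (bound_continuousAt.tendsto.comp hR_tendsto) fun n => ?_
  obtain ⟨hRn, x, -, hsub⟩ := hR_mem n
  exact SDom_le_Scrit_mul_of_ball_subset hs0 hs1 hq hRn hsub

/-- upper bound `S_{s,q}(Ω) ≤ 𝒮_{s,1*} (ω_N R_Ω^N)^{1/1*_s - 1/q}`. -/
theorem S_domain_upper_bound (N : ℕ) (hN : 1 ≤ N) (s : ℝ) (hs0 : 0 < s) (hs1 : s < 1)
    (Ω : Set (Rn N)) (hΩne : Ω.Nonempty) (hΩopen : IsOpen Ω) (hΩbd : Bornology.IsBounded Ω)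
    (q : ℝ) (hq1 : 1 ≤ q) (hq : q < (N : ℝ) / ((N : ℝ) - s)) :
    SDom N s q Ω ≤ Scrit N s *
      (omegaN N * inradius N Ω ^ (N : ℝ)) ^ (((N : ℝ) - s) / (N : ℝ) - 1 / q) := by
  have : NeZero N := ⟨by omega⟩
  exact S_domain_upper_bound_general N hN s hs0 hs1 Ω (hΩopen.interior_eq.symm ▸ hΩne)
    (bddAbove_inscribed_radii hΩbd) q (by linarith)
end
end

section
/- Let N ≥ 1, 0 < s < 1 and k > 0, and define f : ℝ^N → ℝ by f(x) = (k² − |x|²)^s for |x| ≤ k and f(x) = 0 for |x| > k. Then E_s(f) = ∫_{ℝ^N} |2πξ|^{2s} |f̂(ξ)|² dξ = (2^{2s} ω_N N / (N + 2s)) · Γ(s+1)² · k^{N+2s}. -/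
open MeasureTheory Real
open scoped ENNReal FourierTransform

noncomputable section

/-- The Fourier transform `û(ξ) = ∫ u(x) e^{-2πi x·ξ} dx` of a real-valued function. -/
def FT (N : ℕ) (u : Rn N → ℝ) : Rn N → ℂ :=
  𝓕 (fun x => (u x : ℂ))

/-- The energy `E_s(u) = ∫ |2πξ|^{2s} |û(ξ)|² dξ = ‖(-Δ)^{s/2}u‖²_{L²}`,
as an extended nonnegative real. -/
def esE (N : ℕ) (s : ℝ) (u : Rn N → ℝ) : ℝ≥0∞ :=
  ∫⁻ ξ, ENNReal.ofReal ((2 * π * ‖ξ‖) ^ (2 * s) * ‖FT N u ξ‖ ^ 2)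

/-!
Put `ν = s + N / 2` and let `C_ν(x) = ∑ xᵐ / (m! Γ(ν + m + 1))`, so that
`J_ν(z) = (z / 2)^ν C_ν(-z² / 4)`.

Integrating `(k² - |x|²)₊^s` over the hyperplanes orthogonal to `ξ` gives a one-dimensional
truncated power with exponent `s + (N - 1) / 2`; by Poisson's integral its cosine transform, hence
`f̂(ξ)`, is a multiple of `C_ν(-(π k |ξ|)²)`. In polar coordinates the energy becomes a multiple of
`∫₀^∞ y^{ν-1} C_ν(-y)² dy`, and it remains to see that this integral is `1 / ν`.

The coefficients of `C_ν²` are given by the Vandermonde convolution, and the duplication formula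
turns them into beta integrals: `C_ν(x)²` is a multiple of the integral of `C_ν(4 t x)` over
`0 < t < 1` with weight `(t (1 - t))^{ν - 1/2}`. Writing `y^{ν-1} = ∫₀^∞ y^ν e^{-q y} dq` and
integrating first in `y`, where the series of `C_ν` sums to `q^{-ν-1} e^{-4t/q}`, then in `q`,
leaves the beta integral `∫₀¹ t^{-1/2} (1 - t)^{ν - 1/2} dt`.
-/

open Set Filter Topology Module
open ProbabilityTheory (beta)

section Termwise

variable {α : Type*} [MeasurableSpace α] {μ : Measure α}

lemma integrable_of_integral_eq_of_pos {f : α → ℝ} {c : ℝ} (h : ∫ x, f x ∂μ = c) (hc : 0 < c) :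
    Integrable f μ :=
  not_imp_comm.1 integral_undef (h ▸ hc.ne')

lemma hasSum_mul_integral_of_nonneg {ι : Type*} [Countable ι] {a : ι → ℝ} {F : ι → α → ℝ}
    (hF₀ : ∀ i, 0 ≤ᵐ[μ] F i) (hF : ∀ i, Integrable (F i) μ)
    (ha : Summable fun i => a i * ∫ x, F i x ∂μ) :
    HasSum (fun i => a i * ∫ x, F i x ∂μ) (∫ x, ∑' i, a i * F i x ∂μ) := by
  have hnorm (i : ι) : ∫ x, ‖a i * F i x‖ ∂μ = |a i * ∫ x, F i x ∂μ| := by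
    rw [abs_mul, abs_of_nonneg (integral_nonneg_of_ae (hF₀ i)), ← integral_const_mul]
    refine integral_congr_ae ((hF₀ i).mono fun x hx => ?_)
    simp only [norm_mul, Real.norm_eq_abs, abs_of_nonneg (show 0 ≤ F i x from hx)]
  have h := hasSum_integral_of_summable_integral_norm (fun i => (hF i).const_mul (a i))
    (by simpa only [hnorm] using ha.abs)
  simpa only [integral_const_mul] using h

lemma integral_integral_swap_of_nonneg {β : Type*} [MeasurableSpace β] {ν : Measure β} [SFinite μ]
    [SFinite ν] {F : α → β → ℝ} (hF : AEStronglyMeasurable F.uncurry (μ.prod ν))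
    (hF₀ : 0 ≤ᵐ[μ.prod ν] F.uncurry) (hleft : ∀ᵐ x ∂μ, Integrable (F x) ν)
    (hright : ∀ᵐ y ∂ν, Integrable (F · y) μ) :
    ∫ x, ∫ y, F x y ∂ν ∂μ = ∫ y, ∫ x, F x y ∂μ ∂ν := by
  by_cases hint : Integrable F.uncurry (μ.prod ν)
  · exact integral_integral_swap hint
  have hnorm : (fun p => ‖F.uncurry p‖) =ᵐ[μ.prod ν] F.uncurry :=
    hF₀.mono fun p hp => Real.norm_of_nonneg hp
  have hnot_left : ¬Integrable (fun x => ∫ y, F x y ∂ν) μ := fun h => by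
    refine hint ((integrable_prod_iff hF).2 ⟨hleft, h.congr ?_⟩)
    filter_upwards [Measure.ae_ae_of_ae_prod hnorm] with x hx
    exact (integral_congr_ae hx).symm
  have hnot_right : ¬Integrable (fun y => ∫ x, F x y ∂μ) ν := fun h => by
    refine hint ((integrable_prod_iff' hF).2 ⟨hright, h.congr ?_⟩)
    filter_upwards [Measure.ae_ae_of_ae_prod
        (Measure.measurePreserving_swap.quasiMeasurePreserving.ae hnorm)] with y hy
    exact (integral_congr_ae hy).symm
  rw [integral_undef hnot_left, integral_undef hnot_right]

end Termwise

/-- The truncated power `x₊^s` (with value `0` on `x ≤ 0`, also for `s = 0`), so that the bump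
of the theorem is `(k² - ‖x‖²)₊^s` off the sphere `‖x‖ = k`. -/
def truncPow (s : ℝ) : ℝ → ℝ :=
  (Ioi 0).indicator (· ^ s)

lemma truncPow_of_pos (s : ℝ) {x : ℝ} (hx : 0 < x) : truncPow s x = x ^ s :=
  indicator_of_mem hx _

lemma truncPow_of_nonpos (s : ℝ) {x : ℝ} (hx : x ≤ 0) : truncPow s x = 0 :=
  indicator_of_notMem (not_lt.2 hx) _

lemma truncPow_nonneg (s x : ℝ) : 0 ≤ truncPow s x :=
  indicator_nonneg (fun _ hy => rpow_nonneg (le_of_lt hy) s) x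

@[fun_prop]
lemma measurable_truncPow (s : ℝ) : Measurable (truncPow s) :=
  (measurable_id.pow_const s).indicator measurableSet_Ioi

lemma truncPow_mul (s : ℝ) {c : ℝ} (hc : 0 < c) (x : ℝ) :
    truncPow s (c * x) = c ^ s * truncPow s x := by
  rcases lt_or_ge 0 x with hx | hx
  · rw [truncPow_of_pos s hx, truncPow_of_pos s (mul_pos hc hx), mul_rpow hc.le hx.le]
  · rw [truncPow_of_nonpos s hx, truncPow_of_nonpos s (mul_nonpos_of_nonneg_of_nonpos hc.le hx),
      mul_zero]

section Beta

lemma integral_Ioo_rpow_mul_one_sub_rpow {a b : ℝ} (ha : 0 < a) (hb : 0 < b) :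
    ∫ t in Ioo (0 : ℝ) 1, t ^ (a - 1) * (1 - t) ^ (b - 1) = beta a b := by
  have hpdf : ∫ t in Ioo (0 : ℝ) 1, 1 / beta a b * t ^ (a - 1) * (1 - t) ^ (b - 1) = 1 := by
    rw [integral_eq_lintegral_of_nonneg_ae, ← ProbabilityTheory.lintegral_betaPDF,
      ProbabilityTheory.lintegral_betaPDF_eq_one ha hb, ENNReal.toReal_one]
    · filter_upwards [ae_restrict_mem measurableSet_Ioo] with t ht
      have h0 := ht.1
      have h1 := sub_pos.2 ht.2
      have hB := ProbabilityTheory.beta_pos ha hb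
      positivity
    · exact Measurable.aestronglyMeasurable (by fun_prop)
  simp_rw [mul_assoc] at hpdf
  rwa [integral_const_mul, one_div, inv_mul_eq_one₀ (ProbabilityTheory.beta_pos ha hb).ne',
    eq_comm] at hpdf

lemma integral_rpow_mul_truncPow_one_sub {a s : ℝ} (ha : 0 < a) (hs : -1 < s) :
    ∫ y in Ioi (0 : ℝ), y ^ (a - 1) * truncPow s (1 - y) = beta a (s + 1) := by
  rw [← integral_Ioo_rpow_mul_one_sub_rpow ha (by linarith : 0 < s + 1), add_sub_cancel_right,
    setIntegral_eq_of_subset_of_forall_sdiff_eq_zero measurableSet_Ioi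
      (show Ioo (0 : ℝ) 1 ⊆ Ioi 0 from fun _ ht => ht.1)]
  · refine setIntegral_congr_fun measurableSet_Ioo fun t ht => ?_
    simp only [truncPow_of_pos s (sub_pos.2 ht.2)]
  · intro t ht
    have ht1 : 1 ≤ t := not_lt.1 fun h => ht.2 ⟨ht.1, h⟩
    rw [truncPow_of_nonpos s (sub_nonpos.2 ht1), mul_zero]

lemma integral_rpow_mul_comp_mul_sq (a : ℝ) {c : ℝ} (hc : 0 < c) (g : ℝ → ℝ) :
    ∫ r in Ioi (0 : ℝ), r ^ (2 * a - 1) * g (c * r ^ 2) =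
      c ^ (-a) / 2 * ∫ y in Ioi (0 : ℝ), y ^ (a - 1) * g y := by
  have hsq := integral_comp_rpow_Ioi_of_pos
    (g := fun y => (c * y) ^ (a - 1) * g (c * y)) (two_pos : (0 : ℝ) < 2)
  rw [integral_comp_mul_left_Ioi (fun y => y ^ (a - 1) * g y) 0 hc, mul_zero, smul_eq_mul,
    eq_inv_mul_iff_mul_eq₀ hc.ne'] at hsq
  rw [← hsq, ← integral_const_mul, ← integral_const_mul]
  refine setIntegral_congr_fun measurableSet_Ioi fun r hr => ?_
  have hr : 0 < r := hr
  have hr_pow : r ^ (2 * a - 1) = r * (r ^ 2) ^ (a - 1) := by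
    rw [show 2 * a - 1 = 1 + (2 : ℕ) * (a - 1) by push_cast; ring, rpow_add hr, rpow_one,
      rpow_natCast_mul hr.le]
  have hc_pow : c ^ (-a) * (c * c ^ (a - 1)) = 1 := by
    rw [rpow_neg hc.le, rpow_sub_one hc.ne', mul_div_cancel₀ _ hc.ne',
      inv_mul_cancel₀ (rpow_pos_of_pos hc a).ne']
  simp only [show (2 : ℝ) - 1 = 1 by norm_num, rpow_one, rpow_two, smul_eq_mul, hr_pow,
    mul_rpow hc.le (sq_nonneg r)]
  linear_combination (-r * (r ^ 2) ^ (a - 1) * g (c * r ^ 2)) * hc_pow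

lemma integral_rpow_mul_truncPow_sub_sq {a s : ℝ} (ha : 0 < a) (hs : -1 < s) (c : ℝ) :
    ∫ r in Ioi (0 : ℝ), r ^ (2 * a - 1) * truncPow s (c - r ^ 2) =
      beta a (s + 1) / 2 * truncPow (s + a) c := by
  rcases le_or_gt c 0 with hc | hc
  · simp_rw [truncPow_of_nonpos _ hc, mul_zero]
    refine integral_eq_zero_of_ae (.of_forall fun r => ?_)
    simp only [truncPow_of_nonpos s (show c - r ^ 2 ≤ 0 by nlinarith [sq_nonneg r]), mul_zero,
      Pi.zero_apply]
  have hscale (r : ℝ) : truncPow s (c - r ^ 2) = c ^ s * truncPow s (1 - c⁻¹ * r ^ 2) := by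
    rw [← truncPow_mul s hc, mul_sub, mul_inv_cancel_left₀ hc.ne', mul_one]
  simp_rw [hscale, mul_left_comm _ (c ^ s)]
  rw [integral_const_mul,
    integral_rpow_mul_comp_mul_sq a (inv_pos.2 hc) fun y => truncPow s (1 - y),
    integral_rpow_mul_truncPow_one_sub ha hs, truncPow_of_pos _ hc, rpow_add hc,
    inv_rpow hc.le, rpow_neg hc.le, inv_inv]
  ring

lemma integral_pow_two_mul_mul_truncPow_sub_sq (m : ℕ) {s : ℝ} (hs : -1 < s) (c : ℝ) :
    ∫ t : ℝ, t ^ (2 * m) * truncPow s (c - t ^ 2) =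
      beta (m + 1 / 2) (s + 1) * truncPow (s + (m + 1 / 2)) c := by
  have heven := integral_comp_abs (f := fun t => t ^ (2 * m) * truncPow s (c - t ^ 2))
  simp only [sq_abs, Even.pow_abs (even_two_mul m)] at heven
  have hhalf := integral_rpow_mul_truncPow_sub_sq (a := m + 1 / 2) (by positivity) hs c
  have hexp (r : ℝ) : r ^ (2 * ((m : ℝ) + 1 / 2) - 1) = r ^ (2 * m) := by
    rw [← rpow_natCast]; push_cast; ring_nf
  simp only [hexp] at hhalf
  rw [heven, hhalf]
  ring

end Beta

section Slicing

variable {V : Type*} [NormedAddCommGroup V] [InnerProductSpace ℝ V] [FiniteDimensional ℝ V]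
  [MeasurableSpace V] [BorelSpace V]

lemma integral_fun_norm_eq [Nontrivial V] (g : ℝ → ℝ) :
    ∫ x : V, g ‖x‖ = 2 * π ^ (finrank ℝ V / 2 : ℝ) / Gamma (finrank ℝ V / 2) *
      ∫ r in Ioi (0 : ℝ), r ^ (finrank ℝ V - 1 : ℝ) * g r := by
  have hd : 0 < finrank ℝ V := finrank_pos
  have hball : volume.real (Metric.ball (0 : V) 1) =
      π ^ (finrank ℝ V / 2 : ℝ) / Gamma (finrank ℝ V / 2 + 1) := by
    rw [Measure.real, InnerProductSpace.volume_ball, ENNReal.ofReal_one, one_pow, one_mul,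
      ENNReal.toReal_ofReal (by positivity), sqrt_eq_rpow, ← rpow_mul_natCast pi_pos.le]
    ring_nf
  rw [integral_fun_norm_addHaar, hball, Gamma_add_one (by positivity)]
  simp only [← Nat.cast_pred hd, rpow_natCast, nsmul_eq_mul, smul_eq_mul]
  have : 0 < Gamma (finrank ℝ V / 2) := by positivity
  field_simp

lemma integral_truncPow_sub_norm_sq {s : ℝ} (hs : -1 < s) (c : ℝ) :
    ∫ x : V, truncPow s (c - ‖x‖ ^ 2) =
      π ^ (finrank ℝ V / 2 : ℝ) * Gamma (s + 1) / Gamma (s + finrank ℝ V / 2 + 1) *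
        truncPow (s + finrank ℝ V / 2) c := by
  rcases subsingleton_or_nontrivial V with hV | hV
  · have huniv : parallelepiped (stdOrthonormalBasis ℝ V) = univ :=
      Subsingleton.eq_univ_of_nonempty
        ⟨0, (mem_parallelepiped_iff _ _).2 ⟨0, left_mem_Icc.2 zero_le_one, by simp⟩⟩
    have hvol := (stdOrthonormalBasis ℝ V).volume_parallelepiped
    rw [huniv] at hvol
    have hΓ : 0 < Gamma (s + 1) := Gamma_pos_of_pos (by linarith)
    simp [Subsingleton.eq_zero (_ : V), measureReal_def, hvol, finrank_zero_of_subsingleton, hΓ.ne']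
  · have hd : (0 : ℝ) < finrank ℝ V := Nat.cast_pos.2 finrank_pos
    have hradial := integral_rpow_mul_truncPow_sub_sq (half_pos hd) hs c
    rw [mul_div_cancel₀ _ two_ne_zero] at hradial
    rw [integral_fun_norm_eq fun r => truncPow s (c - r ^ 2), hradial, beta,
      show (finrank ℝ V : ℝ) / 2 + (s + 1) = s + finrank ℝ V / 2 + 1 by ring]
    have : 0 < Gamma (finrank ℝ V / 2) := by positivity
    field_simp

lemma integrable_truncPow_sub_norm_sq {s : ℝ} (hs : -1 < s) {c : ℝ} (hc : 0 < c) :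
    Integrable fun x : V => truncPow s (c - ‖x‖ ^ 2) := by
  refine integrable_of_integral_eq_of_pos (integral_truncPow_sub_norm_sq hs c) ?_
  rw [truncPow_of_pos _ hc]
  have h₁ : 0 < s + 1 := by linarith
  have h₂ : 0 < s + finrank ℝ V / 2 + 1 := by
    rw [add_right_comm]; positivity
  positivity

lemma measurePreserving_smul_add_orthogonal {e : V} (he : ‖e‖ = 1) :
    MeasurePreserving fun p : ℝ × (ℝ ∙ e)ᗮ => p.1 • e + p.2 :=
  (((ℝ ∙ e).orthogonalDecomposition.symm.measurePreserving).comp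
    (WithLp.volume_preserving_toLp _ _)).comp
      ((LinearIsometryEquiv.toSpanUnitSingleton e he).measurePreserving.prod
        (MeasurePreserving.id volume))

lemma integral_eq_integral_integral_orthogonal {e : V} (he : ‖e‖ = 1) {g : V → ℝ}
    (hg : Integrable g) :
    ∫ x, g x = ∫ t : ℝ, ∫ w : (ℝ ∙ e)ᗮ, g (t • e + w) := by
  have hmp := measurePreserving_smul_add_orthogonal he
  calc ∫ x, g x = ∫ p : ℝ × (ℝ ∙ e)ᗮ, g (p.1 • e + p.2) := by
        rw [← hmp.map_eq, integral_map hmp.aemeasurable (hmp.map_eq.symm ▸ hg.aestronglyMeasurable)]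
    _ = ∫ t : ℝ, ∫ w : (ℝ ∙ e)ᗮ, g (t • e + w) :=
        integral_prod _ ((hmp.integrable_comp hg.aestronglyMeasurable).2 hg)

lemma integral_comp_inner_mul_truncPow {s : ℝ} (hs : -1 < s) {c : ℝ} (hc : 0 < c) {e : V}
    (he : ‖e‖ = 1) {F : ℝ → ℝ} (hF : Continuous F) {C : ℝ} (hFC : ∀ t, |F t| ≤ C) :
    ∫ x : V, F (inner ℝ e x) * truncPow s (c - ‖x‖ ^ 2) =
      π ^ ((finrank ℝ V - 1) / 2 : ℝ) * Gamma (s + 1) / Gamma (s + (finrank ℝ V - 1) / 2 + 1) *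
        ∫ t, F t * truncPow (s + (finrank ℝ V - 1) / 2) (c - t ^ 2) := by
  have he₀ : e ≠ 0 := norm_ne_zero_iff.1 (he ▸ one_ne_zero)
  have hdim : (finrank ℝ (ℝ ∙ e)ᗮ : ℝ) = finrank ℝ V - 1 := by
    rw [← (ℝ ∙ e).finrank_add_finrank_orthogonal, finrank_span_singleton he₀]
    push_cast; ring
  have hinner (t : ℝ) (w : (ℝ ∙ e)ᗮ) : inner ℝ e (t • e + w) = t := by
    rw [inner_add_right, inner_smul_right, real_inner_self_eq_norm_sq, he,
      Submodule.mem_orthogonal_singleton_iff_inner_right.1 w.2]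
    ring
  have hnorm (t : ℝ) (w : (ℝ ∙ e)ᗮ) : ‖t • e + (w : V)‖ ^ 2 = t ^ 2 + ‖w‖ ^ 2 := by
    rw [norm_add_sq_real, inner_smul_left, Submodule.mem_orthogonal_singleton_iff_inner_right.1 w.2,
      norm_smul, he]
    simp
  have hint : Integrable fun x : V => F (inner ℝ e x) * truncPow s (c - ‖x‖ ^ 2) :=
    (integrable_truncPow_sub_norm_sq hs hc).bdd_mul (c := C)
      (by fun_prop) (.of_forall fun x => hFC _)
  simp only [integral_eq_integral_integral_orthogonal he hint, hinner, hnorm, integral_const_mul,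
    ← sub_sub, integral_truncPow_sub_norm_sq hs, hdim, mul_left_comm (F _)]

end Slicing

section BesselClifford

lemma Gamma_natCast_add_half (m : ℕ) :
    Gamma (m + 1 / 2) = (2 * m).factorial / (4 ^ m * m.factorial) * √π := by
  have hdup := Gamma_mul_Gamma_add_half (m + 1 / 2)
  rw [add_assoc, add_halves, Gamma_nat_eq_factorial,
    show 2 * ((m : ℝ) + 1 / 2) = (2 * m : ℕ) + 1 by push_cast; ring, Gamma_nat_eq_factorial,
    sub_add_cancel_right, rpow_neg two_pos.le, rpow_natCast, pow_mul,
    show (2 : ℝ) ^ 2 = 4 by norm_num] at hdup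
  have : (0 : ℝ) < m.factorial := by positivity
  field_simp at hdup ⊢
  exact hdup

/-- The coefficients of the Bessel–Clifford function. -/
def besselCliffordCoeff (ν : ℝ) (m : ℕ) : ℝ :=
  (m.factorial * Gamma (ν + m + 1))⁻¹

/-- The Bessel–Clifford function, the entire function `C_ν` for which the Bessel function of the
first kind is `J_ν(z) = (z / 2) ^ ν * C_ν(-z² / 4)`. -/
def besselClifford (ν x : ℝ) : ℝ :=
  ∑' m : ℕ, besselCliffordCoeff ν m * x ^ m

lemma besselCliffordCoeff_pos {ν : ℝ} (hν : -1 < ν) (m : ℕ) : 0 < besselCliffordCoeff ν m := by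
  have h : 0 < ν + m + 1 := by linarith [m.cast_nonneg (α := ℝ)]
  rw [besselCliffordCoeff]
  positivity

lemma besselCliffordCoeff_succ {ν : ℝ} (hν : -1 < ν) (m : ℕ) :
    besselCliffordCoeff ν (m + 1) = besselCliffordCoeff ν m / ((m + 1) * (ν + m + 1)) := by
  have h : 0 < ν + m + 1 := by linarith [m.cast_nonneg (α := ℝ)]
  rw [besselCliffordCoeff, besselCliffordCoeff, m.factorial_succ,
    show ν + (m + 1 : ℕ) + 1 = (ν + m + 1) + 1 by push_cast; ring, Gamma_add_one h.ne']
  push_cast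
  field_simp

lemma summable_norm_besselClifford {ν : ℝ} (hν : -1 < ν) (x : ℝ) :
    Summable fun m : ℕ => ‖besselCliffordCoeff ν m * x ^ m‖ := by
  have hlim : Tendsto (fun m : ℕ => (m + 1) * (ν + m + 1)) atTop atTop := by
    have h (a : ℝ) : Tendsto (fun m : ℕ => m + a) atTop atTop :=
      tendsto_atTop_add_const_right _ _ tendsto_natCast_atTop_atTop
    exact (h 1).atTop_mul_atTop₀ ((h (ν + 1)).congr fun m => by ring)
  refine summable_of_ratio_norm_eventually_le (r := 1 / 2) (by norm_num) ?_
  filter_upwards [hlim.eventually_ge_atTop (2 * |x|)] with m hm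
  have h : 0 < ν + m + 1 := by linarith [m.cast_nonneg (α := ℝ)]
  rw [besselCliffordCoeff_succ hν, pow_succ', norm_norm, norm_norm, div_mul_eq_mul_div,
    mul_left_comm, mul_div_right_comm, norm_mul, norm_div, Real.norm_eq_abs x,
    Real.norm_of_nonneg (by positivity : 0 ≤ (m + 1) * (ν + m + 1))]
  refine mul_le_mul_of_nonneg_right ?_ (norm_nonneg _)
  rw [div_le_div_iff₀ (by positivity) two_pos]
  linarith

lemma hasSum_besselClifford {ν : ℝ} (hν : -1 < ν) (x : ℝ) :
    HasSum (fun m : ℕ => besselCliffordCoeff ν m * x ^ m) (besselClifford ν x) :=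
  (summable_norm_besselClifford hν x).of_norm.hasSum

lemma abs_besselClifford_le {ν x y : ℝ} (hν : -1 < ν) (hxy : |x| ≤ y) :
    |besselClifford ν x| ≤ besselClifford ν y := by
  rw [← Real.norm_eq_abs]
  refine tsum_of_norm_bounded (hasSum_besselClifford hν y) fun m => ?_
  rw [norm_mul, norm_pow, Real.norm_of_nonneg (besselCliffordCoeff_pos hν m).le]
  gcongr
  · exact (besselCliffordCoeff_pos hν m).le
  · exact hxy

lemma measurable_besselClifford {ν : ℝ} (hν : -1 < ν) : Measurable (besselClifford ν) := by
  refine measurable_of_tendsto_metrizable (fun n => ?_)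
    (tendsto_pi_nhds.2 fun x => (hasSum_besselClifford hν x).tendsto_sum_nat)
  fun_prop

/-- Poisson's integral for the Bessel function `J_{s + 1/2}`. -/
lemma integral_cos_mul_truncPow_sub_sq {s : ℝ} (hs : -1 < s) {c : ℝ} (hc : 0 < c) (a : ℝ) :
    ∫ t, cos (a * t) * truncPow s (c - t ^ 2) =
      √π * Gamma (s + 1) * c ^ (s + 1 / 2) * besselClifford (s + 1 / 2) (-(c * a ^ 2 / 4)) := by
  have hν : -1 < s + 1 / 2 := by linarith
  have hmoment (m : ℕ) : (-1) ^ m * a ^ (2 * m) / (2 * m).factorial *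
      ∫ t, t ^ (2 * m) * truncPow s (c - t ^ 2) =
        √π * Gamma (s + 1) * c ^ (s + 1 / 2) *
          (besselCliffordCoeff (s + 1 / 2) m * (-(c * a ^ 2 / 4)) ^ m) := by
    have : 0 < Gamma (s + 1 / 2 + m + 1) :=
      Gamma_pos_of_pos (by linarith [m.cast_nonneg (α := ℝ)])
    rw [integral_pow_two_mul_mul_truncPow_sub_sq m hs, truncPow_of_pos _ hc, beta,
      besselCliffordCoeff, Gamma_natCast_add_half,
      show (m : ℝ) + 1 / 2 + (s + 1) = s + 1 / 2 + m + 1 by ring,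
      show s + (m + 1 / 2) = s + 1 / 2 + m by ring, rpow_add_natCast hc.ne',
      neg_pow (c * a ^ 2 / 4), div_pow, mul_pow, ← pow_mul]
    field_simp
  have hint (m : ℕ) : Integrable fun t => t ^ (2 * m) * truncPow s (c - t ^ 2) := by
    refine integrable_of_integral_eq_of_pos (integral_pow_two_mul_mul_truncPow_sub_sq m hs c) ?_
    rw [truncPow_of_pos _ hc]
    exact mul_pos (ProbabilityTheory.beta_pos (by positivity) (by linarith)) (rpow_pos_of_pos hc _)
  have hterm := hasSum_mul_integral_of_nonneg
    (a := fun m : ℕ => (-1) ^ m * a ^ (2 * m) / (2 * m).factorial)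
    (fun m => .of_forall fun t => mul_nonneg ((even_two_mul m).pow_nonneg t) (truncPow_nonneg _ _))
    hint (by simpa only [hmoment] using (hasSum_besselClifford hν _).summable.mul_left _)
  simp only [hmoment] at hterm
  rw [((hasSum_besselClifford hν _).mul_left _).unique hterm]
  refine integral_congr_ae (.of_forall fun t => ?_)
  have hcos := (Real.hasSum_cos (a * t)).mul_right (truncPow s (c - t ^ 2))
  refine hcos.tsum_eq.symm.trans (tsum_congr fun m => ?_)
  rw [mul_pow]
  ring

end BesselClifford

section Fourier

variable {V : Type*} [NormedAddCommGroup V] [InnerProductSpace ℝ V] [FiniteDimensional ℝ V]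
  [MeasurableSpace V] [BorelSpace V]

lemma fourier_ofReal_of_even {u : V → ℝ} (hu : ∀ x, u (-x) = u x) (hui : Integrable u) (ξ : V) :
    𝓕 (fun x => (u x : ℂ)) ξ = ((∫ x, cos (2 * π * inner ℝ x ξ) * u x : ℝ) : ℂ) := by
  have hsin : ∫ x, sin (-(2 * π * inner ℝ x ξ)) * u x = 0 := by
    have hodd := integral_neg_eq_self (fun x => sin (-(2 * π * inner ℝ x ξ)) * u x) volume
    simp only [inner_neg_left, mul_neg, neg_neg, hu, sin_neg, neg_mul, integral_neg] at hodd ⊢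
    linarith
  have hcos_int : Integrable fun x => cos (2 * π * inner ℝ x ξ) * u x :=
    hui.bdd_mul (c := 1) (by fun_prop) (.of_forall fun _ => abs_cos_le_one _)
  have hsin_int : Integrable fun x => sin (-(2 * π * inner ℝ x ξ)) * u x :=
    hui.bdd_mul (c := 1) (by fun_prop) (.of_forall fun _ => abs_sin_le_one _)
  have hexp (x : V) : Complex.exp (↑(-2 * π * inner ℝ x ξ) * Complex.I) • (u x : ℂ) =
      ↑(cos (2 * π * inner ℝ x ξ) * u x) +
        ↑(sin (-(2 * π * inner ℝ x ξ)) * u x) * Complex.I := by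
    rw [Complex.exp_mul_I, smul_eq_mul, ← cos_neg]
    push_cast
    ring_nf
  rw [Real.fourier_eq']
  simp only [hexp]
  rw [integral_add hcos_int.ofReal (hsin_int.ofReal.mul_const _), integral_mul_const,
    integral_complex_ofReal, integral_complex_ofReal, hsin]
  simp

theorem fourier_truncPow_sub_norm_sq [Nontrivial V] {s : ℝ} (hs : -1 < s) {c : ℝ} (hc : 0 < c)
    (ξ : V) :
    𝓕 (fun x : V => (truncPow s (c - ‖x‖ ^ 2) : ℂ)) ξ =
      ((π ^ (finrank ℝ V / 2 : ℝ) * Gamma (s + 1) * c ^ (s + finrank ℝ V / 2) *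
        besselClifford (s + finrank ℝ V / 2) (-(c * (π * ‖ξ‖) ^ 2)) : ℝ) : ℂ) := by
  obtain ⟨e, he, hξ⟩ : ∃ e : V, ‖e‖ = 1 ∧ ‖ξ‖ • e = ξ := by
    rcases eq_or_ne ξ 0 with rfl | hξ
    · obtain ⟨e, he⟩ := exists_norm_eq V zero_le_one
      exact ⟨e, he, by simp⟩
    · exact ⟨‖ξ‖⁻¹ • ξ, norm_smul_inv_norm hξ, smul_inv_smul₀ (norm_ne_zero_iff.2 hξ) ξ⟩
  have hinner (x : V) : 2 * π * inner ℝ x ξ = 2 * π * ‖ξ‖ * inner ℝ e x := by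
    rw [← real_inner_comm, ← hξ, real_inner_smul_left, hξ, ← mul_assoc]
  have hd : (1 : ℝ) ≤ finrank ℝ V := Nat.one_le_cast.2 finrank_pos
  have hσ : -1 < s + (finrank ℝ V - 1 : ℝ) / 2 := by linarith
  have hΓ : 0 < Gamma (s + (finrank ℝ V - 1 : ℝ) / 2 + 1) := Gamma_pos_of_pos (by linarith)
  rw [fourier_ofReal_of_even (by simp) (integrable_truncPow_sub_norm_sq hs hc)]
  simp only [hinner]
  rw [integral_comp_inner_mul_truncPow hs hc he (F := fun t => cos (2 * π * ‖ξ‖ * t)) (by fun_prop)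
    (fun t => abs_cos_le_one _), integral_cos_mul_truncPow_sub_sq hσ hc]
  have hpi : π ^ (finrank ℝ V / 2 : ℝ) = π ^ ((finrank ℝ V - 1 : ℝ) / 2) * √π := by
    rw [sqrt_eq_rpow, ← rpow_add pi_pos]; ring_nf
  rw [hpi, show s + (finrank ℝ V - 1 : ℝ) / 2 + 1 / 2 = s + finrank ℝ V / 2 by ring,
    show c * (2 * π * ‖ξ‖) ^ 2 / 4 = c * (π * ‖ξ‖) ^ 2 by ring, div_mul_eq_mul_div]
  congr 1
  rw [div_eq_iff hΓ.ne']
  ring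

end Fourier

section Square

open Finset.HasAntidiagonal (antidiagonal mem_antidiagonal)

lemma sum_antidiagonal_choose_div_Gamma_mul_Gamma (n : ℕ) {a b : ℝ} (ha : 0 < a) (hb : 0 < b)
    (hab : 1 < a + b) :
    ∑ p ∈ antidiagonal n, (n.choose p.1 : ℝ) / (Gamma (a + p.1) * Gamma (b + p.2)) =
      Gamma (a + b + 2 * n - 1) / (Gamma (a + n) * Gamma (b + n) * Gamma (a + b + n - 1)) := by
  induction n generalizing a b with
  | zero =>
    have hΓ : Gamma (a + b - 1) ≠ 0 := (Gamma_pos_of_pos (by linarith)).ne'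
    simp [div_mul_cancel_right₀ hΓ]
  | succ n ih =>
    have hpascal : ∑ p ∈ antidiagonal (n + 1),
        ((n + 1).choose p.1 : ℝ) / (Gamma (a + p.1) * Gamma (b + p.2)) =
          ∑ p ∈ antidiagonal n,
            (n.choose p.1 : ℝ) / (Gamma (a + p.1) * Gamma (b + 1 + p.2)) +
          ∑ p ∈ antidiagonal n,
            (n.choose p.1 : ℝ) / (Gamma (a + 1 + p.1) * Gamma (b + p.2)) := by
      have h := Finset.sum_antidiagonal_choose_succ_mul
        (fun i j : ℕ => 1 / (Gamma (a + i) * Gamma (b + j))) n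
      simp only [mul_one_div] at h
      rw [h]
      congr 1 <;> refine Finset.sum_congr rfl fun p hp => ?_
      · congr 3; push_cast; ring
      · rw [Nat.choose_symm_of_eq_add (mem_antidiagonal.1 hp).symm]
        congr 3; push_cast; ring
    have : (0 : ℝ) ≤ n := n.cast_nonneg
    have hΓa := Gamma_add_one (by positivity : a + n ≠ 0)
    have hΓb := Gamma_add_one (by positivity : b + n ≠ 0)
    have hΓab := Gamma_add_one (by positivity : a + b + 2 * n ≠ 0)
    rw [hpascal, ih ha (by linarith) (by linarith), ih (by linarith) hb (by linarith)]
    push_cast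
    rw [show a + (b + 1) + 2 * (n : ℝ) - 1 = a + b + 2 * n by ring,
      show a + 1 + b + 2 * (n : ℝ) - 1 = a + b + 2 * n by ring,
      show a + b + 2 * ((n : ℝ) + 1) - 1 = a + b + 2 * n + 1 by ring,
      show b + 1 + (n : ℝ) = b + n + 1 by ring, show a + 1 + (n : ℝ) = a + n + 1 by ring,
      show b + ((n : ℝ) + 1) = b + n + 1 by ring, show a + ((n : ℝ) + 1) = a + n + 1 by ring,
      show a + (b + 1) + (n : ℝ) - 1 = a + b + n by ring,
      show a + 1 + b + (n : ℝ) - 1 = a + b + n by ring,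
      show a + b + ((n : ℝ) + 1) - 1 = a + b + n by ring, hΓa, hΓb, hΓab]
    field_simp
    ring

lemma hasSum_besselClifford_mul {μ ν : ℝ} (hμ : -1 < μ) (hν : -1 < ν) (hμν : -1 < μ + ν) (x : ℝ) :
    HasSum (fun n : ℕ => Gamma (μ + ν + 2 * n + 1) / (n.factorial * Gamma (μ + n + 1) *
      Gamma (ν + n + 1) * Gamma (μ + ν + n + 1)) * x ^ n)
        (besselClifford μ x * besselClifford ν x) := by
  have hcauchy (n : ℕ) : ∑ p ∈ antidiagonal n,
      besselCliffordCoeff μ p.1 * x ^ p.1 * (besselCliffordCoeff ν p.2 * x ^ p.2) =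
        Gamma (μ + ν + 2 * n + 1) / (n.factorial * Gamma (μ + n + 1) *
          Gamma (ν + n + 1) * Gamma (μ + ν + n + 1)) * x ^ n := by
    have h := sum_antidiagonal_choose_div_Gamma_mul_Gamma n (a := μ + 1) (b := ν + 1)
      (by linarith) (by linarith) (by linarith)
    rw [show μ + 1 + (ν + 1) + 2 * (n : ℝ) - 1 = μ + ν + 2 * n + 1 by ring,
      show μ + 1 + (ν + 1) + (n : ℝ) - 1 = μ + ν + n + 1 by ring, add_right_comm μ 1,
      add_right_comm ν 1] at h
    rw [mul_assoc, mul_assoc, ← mul_assoc (Gamma _), mul_comm (n.factorial : ℝ), ← div_div, ← h,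
      Finset.sum_div, Finset.sum_mul]
    refine Finset.sum_congr rfl fun p hp => ?_
    rw [← mem_antidiagonal.1 hp, Nat.cast_add_choose, pow_add, besselCliffordCoeff,
      besselCliffordCoeff, add_right_comm μ 1, add_right_comm ν 1]
    field_simp
  have hμs := summable_norm_besselClifford hμ x
  have hνs := summable_norm_besselClifford hν x
  have hsum := (summable_norm_sum_mul_antidiagonal_of_summable_norm hμs hνs).of_norm.hasSum
  rw [← tsum_mul_tsum_eq_tsum_sum_antidiagonal_of_summable_norm hμs hνs] at hsum
  simp only [hcauchy] at hsum
  exact hsum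

lemma integral_Ioo_mul_one_sub_rpow_mul_rpow {ν b : ℝ} (hν : -1 / 2 < ν) (hb : 0 < ν + b + 1 / 2) :
    ∫ t in Ioo (0 : ℝ) 1, (t * (1 - t)) ^ (ν - 1 / 2) * t ^ b =
      beta (ν + b + 1 / 2) (ν + 1 / 2) := by
  rw [← integral_Ioo_rpow_mul_one_sub_rpow hb (by linarith : 0 < ν + 1 / 2)]
  refine setIntegral_congr_fun measurableSet_Ioo fun t ht => ?_
  rw [mul_rpow ht.1.le (sub_pos.2 ht.2).le, mul_right_comm, ← rpow_add ht.1]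
  congr 2 <;> ring

lemma integrableOn_Ioo_mul_one_sub_rpow_mul_rpow {ν b : ℝ} (hν : -1 / 2 < ν)
    (hb : 0 < ν + b + 1 / 2) :
    IntegrableOn (fun t : ℝ => (t * (1 - t)) ^ (ν - 1 / 2) * t ^ b) (Ioo 0 1) :=
  integrable_of_integral_eq_of_pos (integral_Ioo_mul_one_sub_rpow_mul_rpow hν hb)
    (ProbabilityTheory.beta_pos hb (by linarith))

lemma integrableOn_Ioo_mul_one_sub_rpow {ν : ℝ} (hν : -1 / 2 < ν) :
    IntegrableOn (fun t : ℝ => (t * (1 - t)) ^ (ν - 1 / 2)) (Ioo 0 1) := by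
  simpa only [rpow_zero, mul_one] using
    integrableOn_Ioo_mul_one_sub_rpow_mul_rpow hν (b := 0) (by linarith)

lemma besselCliffordCoeff_mul_beta {ν : ℝ} (hν : -1 / 2 < ν) (n : ℕ) :
    4 ^ ν / (√π * Gamma (ν + 1 / 2)) *
      (4 ^ n * besselCliffordCoeff ν n * beta (ν + n + 1 / 2) (ν + 1 / 2)) =
        Gamma (ν + ν + 2 * n + 1) / (n.factorial *
          Gamma (ν + n + 1) * Gamma (ν + n + 1) * Gamma (ν + ν + n + 1)) := by
  have : (0 : ℝ) ≤ n := n.cast_nonneg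
  have hdup := Gamma_mul_Gamma_add_half (ν + n + 1 / 2)
  rw [add_assoc (ν + n), add_halves, show 2 * (ν + n + 1 / 2) = ν + ν + 2 * n + 1 by ring,
    show 1 - (ν + ν + 2 * n + 1) = 2 * -(ν + n) by ring, rpow_mul two_pos.le,
    rpow_neg (by positivity), rpow_add (by positivity), rpow_natCast,
    show (2 : ℝ) ^ (2 : ℝ) = 4 by norm_num] at hdup
  have h₁ : 0 < Gamma (ν + 1 / 2) := Gamma_pos_of_pos (by linarith)
  have h₂ : 0 < Gamma (ν + n + 1) := Gamma_pos_of_pos (by linarith)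
  have h₃ : 0 < Gamma (ν + ν + n + 1) := Gamma_pos_of_pos (by linarith)
  rw [besselCliffordCoeff, beta, show ν + n + 1 / 2 + (ν + 1 / 2) = ν + ν + n + 1 by ring]
  generalize Gamma (ν + 1 / 2) = G₁ at h₁ ⊢
  generalize Gamma (ν + n + 1) = G₂ at h₂ hdup ⊢
  generalize Gamma (ν + ν + n + 1) = G₃ at h₃ ⊢
  generalize Gamma (ν + ν + 2 * n + 1) = G₄ at hdup ⊢
  field_simp at hdup ⊢
  linear_combination hdup

theorem besselClifford_sq {ν : ℝ} (hν : -1 / 2 < ν) (x : ℝ) :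
    besselClifford ν x ^ 2 = 4 ^ ν / (√π * Gamma (ν + 1 / 2)) *
      ∫ t in Ioo (0 : ℝ) 1, (t * (1 - t)) ^ (ν - 1 / 2) * besselClifford ν (4 * t * x) := by
  have hpos (n : ℕ) : 0 < ν + n + 1 / 2 := by linarith [n.cast_nonneg (α := ℝ)]
  have hnonneg (n : ℕ) : 0 ≤ᵐ[volume.restrict (Ioo (0 : ℝ) 1)]
      fun t => (t * (1 - t)) ^ (ν - 1 / 2) * t ^ (n : ℝ) := by
    filter_upwards [ae_restrict_mem measurableSet_Ioo] with t ht
    have h₀ := ht.1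
    have h₁ := sub_pos.2 ht.2
    positivity
  have hK : 4 ^ ν / (√π * Gamma (ν + 1 / 2)) ≠ 0 := by
    have h : 0 < ν + 1 / 2 := by linarith
    positivity
  have hsq : HasSum (fun n => 4 ^ ν / (√π * Gamma (ν + 1 / 2)) *
      (besselCliffordCoeff ν n * (4 * x) ^ n *
        ∫ t in Ioo (0 : ℝ) 1, (t * (1 - t)) ^ (ν - 1 / 2) * t ^ (n : ℝ)))
          (besselClifford ν x ^ 2) := by
    rw [sq]
    convert hasSum_besselClifford_mul (μ := ν) (ν := ν) (by linarith) (by linarith) (by linarith) x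
      using 2 with n
    rw [integral_Ioo_mul_one_sub_rpow_mul_rpow hν (hpos n), ← besselCliffordCoeff_mul_beta hν,
      mul_pow]
    ring
  have hterm := hasSum_mul_integral_of_nonneg hnonneg
    (fun n => integrableOn_Ioo_mul_one_sub_rpow_mul_rpow hν (hpos n))
    ((summable_mul_left_iff hK).1 hsq.summable)
  rw [← hsq.tsum_eq, tsum_mul_left, hterm.tsum_eq]
  congr 1
  refine integral_congr_ae (.of_forall fun t => ?_)
  simp only [besselClifford, ← tsum_mul_left]
  refine tsum_congr fun n => ?_
  rw [rpow_natCast, mul_right_comm, mul_pow]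
  ring

end Square

section Weber

/-- Weber's first exponential integral `∫₀^∞ r^{ν+1} e^{-q r²} J_ν(a r) dr`, in the variable
`y = r²` and with `b = -a² / 4`. -/
theorem integral_rpow_mul_exp_mul_besselClifford {ν q : ℝ} (hν : -1 < ν) (hq : 0 < q) (b : ℝ) :
    ∫ y in Ioi (0 : ℝ), y ^ ν * exp (-(q * y)) * besselClifford ν (b * y) =
      q ^ (-ν - 1) * exp (b / q) := by
  have hpos (m : ℕ) : 0 < ν + m + 1 := by linarith [m.cast_nonneg (α := ℝ)]
  have hmoment (m : ℕ) : ∫ y in Ioi (0 : ℝ), y ^ (ν + m) * exp (-(q * y)) =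
      (1 / q) ^ (ν + m + 1) * Gamma (ν + m + 1) := by
    simpa only [add_sub_cancel_right] using integral_rpow_mul_exp_neg_mul_Ioi (hpos m) hq
  have hmoment_int (m : ℕ) : IntegrableOn (fun y => y ^ (ν + m) * exp (-(q * y))) (Ioi 0) :=
    integrable_of_integral_eq_of_pos (hmoment m) (by have := hpos m; positivity)
  have hnonneg (m : ℕ) : 0 ≤ᵐ[volume.restrict (Ioi (0 : ℝ))]
      fun y => y ^ (ν + m) * exp (-(q * y)) := by
    filter_upwards [ae_restrict_mem measurableSet_Ioi] with y hy
    exact mul_nonneg (rpow_nonneg (le_of_lt hy) _) (exp_nonneg _)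
  have hterm (m : ℕ) : besselCliffordCoeff ν m * b ^ m *
      ∫ y in Ioi (0 : ℝ), y ^ (ν + m) * exp (-(q * y)) =
        q ^ (-ν - 1) * ((b / q) ^ m / m.factorial) := by
    have hΓ := (Gamma_pos_of_pos (hpos m)).ne'
    rw [hmoment, besselCliffordCoeff, one_div, inv_rpow hq.le, ← rpow_neg hq.le,
      show -(ν + m + 1) = -ν - 1 - m by ring, rpow_sub_natCast hq.ne', div_pow]
    field_simp
  have hexp : HasSum (fun m : ℕ => besselCliffordCoeff ν m * b ^ m *
      ∫ y in Ioi (0 : ℝ), y ^ (ν + m) * exp (-(q * y))) (q ^ (-ν - 1) * exp (b / q)) := by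
    simp_rw [hterm]
    rw [exp_eq_exp_ℝ]
    exact (NormedSpace.expSeries_div_hasSum_exp (b / q)).mul_left _
  rw [← (hasSum_mul_integral_of_nonneg hnonneg hmoment_int hexp.summable).unique hexp]
  refine setIntegral_congr_fun measurableSet_Ioi fun y hy => ?_
  rw [besselClifford, ← tsum_mul_left]
  refine tsum_congr fun m => ?_
  rw [rpow_add_natCast (ne_of_gt hy), mul_pow]
  ring

lemma integrable_rpow_mul_exp_mul_besselClifford_mul_rpow {ν q : ℝ} (hν : -1 / 2 < ν)
    (hq : 0 < q) :
    Integrable (Function.uncurry fun y t : ℝ => (t * (1 - t)) ^ (ν - 1 / 2) *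
      (y ^ ν * exp (-(q * y)) * besselClifford ν (-(4 * t) * y)))
        ((volume.restrict (Ioi 0)).prod (volume.restrict (Ioo 0 1))) := by
  have hν₁ : -1 < ν := by linarith
  have hC := measurable_besselClifford hν₁
  have hy : IntegrableOn (fun y => y ^ ν * exp (-(q * y)) * besselClifford ν (4 * y)) (Ioi 0) :=
    integrable_of_integral_eq_of_pos (integral_rpow_mul_exp_mul_besselClifford hν₁ hq 4)
      (by positivity)
  refine (hy.mul_prod (integrableOn_Ioo_mul_one_sub_rpow hν)).mono'
    (Measurable.aestronglyMeasurable (by fun_prop)) ?_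
  rw [Measure.prod_restrict]
  filter_upwards [ae_restrict_mem (measurableSet_Ioi.prod measurableSet_Ioo)] with ⟨y, t⟩ hyt
  obtain ⟨hy₀ : 0 < y, ht₀ : 0 < t, ht₁⟩ := hyt
  have : 0 < 1 - t := sub_pos.2 ht₁
  have hle : |besselClifford ν (-(4 * t) * y)| ≤ besselClifford ν (4 * y) := by
    refine abs_besselClifford_le hν₁ ?_
    rw [abs_mul, abs_neg, abs_of_pos (by positivity), abs_of_pos hy₀]
    nlinarith
  rw [Function.uncurry_apply_pair, norm_mul, norm_mul, Real.norm_of_nonneg (by positivity),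
    Real.norm_of_nonneg (by positivity), mul_comm]
  gcongr
  exact hle

lemma mul_besselClifford_neg_sq {ν : ℝ} (hν : -1 / 2 < ν) (a y : ℝ) :
    a * besselClifford ν (-y) ^ 2 = 4 ^ ν / (√π * Gamma (ν + 1 / 2)) * ∫ t in Ioo (0 : ℝ) 1,
      (t * (1 - t)) ^ (ν - 1 / 2) * (a * besselClifford ν (-(4 * t) * y)) := by
  rw [besselClifford_sq hν, mul_left_comm, ← integral_const_mul]
  congr with t
  ring_nf

lemma integrableOn_rpow_mul_exp_mul_besselClifford_sq {ν q : ℝ} (hν : -1 / 2 < ν) (hq : 0 < q) :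
    IntegrableOn (fun y => y ^ ν * exp (-(q * y)) * besselClifford ν (-y) ^ 2) (Ioi 0) := by
  simp_rw [mul_besselClifford_neg_sq hν]
  exact (integrable_rpow_mul_exp_mul_besselClifford_mul_rpow hν hq).integral_prod_left.const_mul _

/-- Weber's second exponential integral `∫₀^∞ r e^{-q r²} J_ν(2 r)² dr`, in the variable `y = r²`;
the right-hand side is an integral representation of the modified Bessel function in its value. -/
theorem integral_rpow_mul_exp_mul_besselClifford_sq {ν q : ℝ} (hν : -1 / 2 < ν) (hq : 0 < q) :
    ∫ y in Ioi (0 : ℝ), y ^ ν * exp (-(q * y)) * besselClifford ν (-y) ^ 2 =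
      4 ^ ν / (√π * Gamma (ν + 1 / 2)) * ∫ t in Ioo (0 : ℝ) 1,
        (t * (1 - t)) ^ (ν - 1 / 2) * (q ^ (-ν - 1) * exp (-(4 * t / q))) := by
  have hν₁ : -1 < ν := by linarith
  simp_rw [mul_besselClifford_neg_sq hν]
  rw [integral_const_mul,
    integral_integral_swap (integrable_rpow_mul_exp_mul_besselClifford_mul_rpow hν hq)]
  simp only [integral_const_mul, integral_rpow_mul_exp_mul_besselClifford hν₁ hq, neg_div]

lemma integral_rpow_mul_exp_neg_div {ν c : ℝ} (hν : 0 < ν) (hc : 0 < c) :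
    ∫ q in Ioi (0 : ℝ), q ^ (-ν - 1) * exp (-(c / q)) = c ^ (-ν) * Gamma ν := by
  have hinv := integral_comp_rpow_Ioi (fun u => u ^ (ν - 1) * exp (-(c * u)))
    (show (-1 : ℝ) ≠ 0 by norm_num)
  rw [integral_rpow_mul_exp_neg_mul_Ioi hν hc, one_div, inv_rpow hc.le, ← rpow_neg hc.le] at hinv
  rw [← hinv]
  refine setIntegral_congr_fun measurableSet_Ioi fun q hq => ?_
  have hq : 0 < q := hq
  rw [abs_neg, abs_one, one_mul, smul_eq_mul, ← rpow_mul hq.le, ← mul_assoc, ← rpow_add hq,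
    rpow_neg_one, div_eq_mul_inv]
  ring_nf

lemma integral_rpow_mul_besselClifford_sq_eq_integral_exp {ν : ℝ} (hν : -1 / 2 < ν) :
    ∫ y in Ioi (0 : ℝ), y ^ (ν - 1) * besselClifford ν (-y) ^ 2 =
      ∫ q in Ioi (0 : ℝ), ∫ y in Ioi (0 : ℝ),
        y ^ ν * exp (-(q * y)) * besselClifford ν (-y) ^ 2 := by
  have hC := measurable_besselClifford (by linarith : -1 < ν)
  rw [← integral_integral_swap_of_nonneg]
  · refine setIntegral_congr_fun measurableSet_Ioi fun y hy => ?_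
    have hexp := integral_exp_mul_Ioi (neg_neg_of_pos hy) 0
    rw [mul_zero, exp_zero, neg_div_neg_eq] at hexp
    simp only [mul_right_comm _ (exp _), integral_const_mul, mul_comm _ y, ← neg_mul, hexp]
    rw [rpow_sub_one (ne_of_gt hy)]
    ring
  · exact Measurable.aestronglyMeasurable (by fun_prop)
  · rw [Measure.prod_restrict]
    filter_upwards [ae_restrict_mem (measurableSet_Ioi.prod measurableSet_Ioi)] with ⟨y, q⟩ hyq
    obtain ⟨hy : 0 < y, -⟩ := hyq
    rw [Pi.zero_apply, Function.uncurry_apply_pair]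
    positivity
  · filter_upwards [ae_restrict_mem measurableSet_Ioi] with y hy
    simp_rw [mul_right_comm _ (exp _), mul_comm _ y, ← neg_mul]
    exact (integrableOn_exp_mul_Ioi (neg_neg_of_pos hy) 0).const_mul _
  · filter_upwards [ae_restrict_mem measurableSet_Ioi] with q hq
    exact integrableOn_rpow_mul_exp_mul_besselClifford_sq hν hq

lemma integral_integral_rpow_mul_exp_neg_div {ν : ℝ} (hν : 0 < ν) :
    ∫ q in Ioi (0 : ℝ), ∫ t in Ioo (0 : ℝ) 1,
      (t * (1 - t)) ^ (ν - 1 / 2) * (q ^ (-ν - 1) * exp (-(4 * t / q))) =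
        4 ^ (-ν) * Gamma ν * beta (1 / 2) (ν + 1 / 2) := by
  rw [integral_integral_swap_of_nonneg]
  · have hbeta := integral_Ioo_mul_one_sub_rpow_mul_rpow (ν := ν) (b := -ν) (by linarith)
      (by linarith)
    rw [add_neg_cancel, zero_add] at hbeta
    rw [← hbeta, ← integral_const_mul]
    refine setIntegral_congr_fun measurableSet_Ioo fun t ht => ?_
    have ht₀ : 0 < t := ht.1
    simp only [integral_const_mul]
    rw [integral_rpow_mul_exp_neg_div hν (by positivity), mul_rpow (by norm_num) ht₀.le]
    ring
  · exact Measurable.aestronglyMeasurable (by fun_prop)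
  · rw [Measure.prod_restrict]
    filter_upwards [ae_restrict_mem (measurableSet_Ioi.prod measurableSet_Ioo)] with ⟨q, t⟩ hqt
    obtain ⟨hq : 0 < q, ht₀ : 0 < t, ht₁⟩ := hqt
    have : 0 < 1 - t := sub_pos.2 ht₁
    rw [Pi.zero_apply, Function.uncurry_apply_pair]
    positivity
  · filter_upwards [ae_restrict_mem measurableSet_Ioi] with q hq
    refine (integrableOn_Ioo_mul_one_sub_rpow (ν := ν) (by linarith)).mul_bdd (c := q ^ (-ν - 1))
      (Measurable.aestronglyMeasurable (by fun_prop)) ?_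
    filter_upwards [ae_restrict_mem measurableSet_Ioo] with t ht
    have hq : 0 < q := hq
    have ht₀ : 0 < t := ht.1
    rw [Real.norm_of_nonneg (by positivity)]
    refine mul_le_of_le_one_right (by positivity) (exp_le_one_iff.2 ?_)
    rw [neg_nonpos]; positivity
  · filter_upwards [ae_restrict_mem measurableSet_Ioo] with t ht
    have ht₀ : 0 < t := ht.1
    exact (integrable_of_integral_eq_of_pos
      (integral_rpow_mul_exp_neg_div hν (mul_pos four_pos ht₀)) (by positivity)).const_mul _

/-- The critical Weber–Schafheitlin integral `∫₀^∞ J_ν(r)² dr / r = 1 / (2 ν)`, in the variable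
`y = r² / 4`. -/
theorem integral_rpow_mul_besselClifford_sq {ν : ℝ} (hν : 0 < ν) :
    ∫ y in Ioi (0 : ℝ), y ^ (ν - 1) * besselClifford ν (-y) ^ 2 = 1 / ν := by
  have hν₁ : -1 / 2 < ν := by linarith
  have : 0 < Gamma (ν + 1 / 2) := by positivity
  have : 0 < Gamma ν := by positivity
  calc ∫ y in Ioi (0 : ℝ), y ^ (ν - 1) * besselClifford ν (-y) ^ 2
      = ∫ q in Ioi (0 : ℝ), ∫ y in Ioi (0 : ℝ),
          y ^ ν * exp (-(q * y)) * besselClifford ν (-y) ^ 2 :=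
        integral_rpow_mul_besselClifford_sq_eq_integral_exp hν₁
    _ = 4 ^ ν / (√π * Gamma (ν + 1 / 2)) * ∫ q in Ioi (0 : ℝ), ∫ t in Ioo (0 : ℝ) 1,
          (t * (1 - t)) ^ (ν - 1 / 2) * (q ^ (-ν - 1) * exp (-(4 * t / q))) := by
        rw [← integral_const_mul]
        exact setIntegral_congr_fun measurableSet_Ioi fun q hq =>
          integral_rpow_mul_exp_mul_besselClifford_sq hν₁ hq
    _ = 1 / ν := by
        rw [integral_integral_rpow_mul_exp_neg_div hν, beta, Gamma_one_half_eq,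
          show 1 / 2 + (ν + 1 / 2) = ν + 1 by ring, Gamma_add_one hν.ne', rpow_neg four_pos.le]
        field_simp

end Weber

section Energy

variable {V : Type*} [NormedAddCommGroup V] [InnerProductSpace ℝ V] [FiniteDimensional ℝ V]
  [MeasurableSpace V] [BorelSpace V]

theorem integral_rpow_mul_norm_fourier_truncPow_sq [Nontrivial V] {s : ℝ} (hs : -1 < s)
    (hds : 0 < finrank ℝ V + 2 * s) {c : ℝ} (hc : 0 < c) :
    ∫ ξ : V, (2 * π * ‖ξ‖) ^ (2 * s) *
        ‖𝓕 (fun x : V => (truncPow s (c - ‖x‖ ^ 2) : ℂ)) ξ‖ ^ 2 =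
      2 ^ (2 * s) * (2 * π ^ (finrank ℝ V / 2 : ℝ) / Gamma (finrank ℝ V / 2)) /
        (finrank ℝ V + 2 * s) * Gamma (s + 1) ^ 2 * c ^ (s + finrank ℝ V / 2) := by
  set d : ℝ := (finrank ℝ V : ℝ)
  set A : ℝ := π ^ (d / 2) * Gamma (s + 1) * c ^ (s + d / 2)
  have hν : 0 < s + d / 2 := by linarith
  have hradial : ∫ r in Ioi (0 : ℝ), r ^ (d - 1) * ((2 * π * r) ^ (2 * s) *
      (A * besselClifford (s + d / 2) (-(c * (π * r) ^ 2))) ^ 2) =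
        (2 * π) ^ (2 * s) * A ^ 2 * ((c * π ^ 2) ^ (-(s + d / 2)) / (d + 2 * s)) := by
    have hscale := integral_rpow_mul_comp_mul_sq (s + d / 2) (by positivity : 0 < c * π ^ 2)
      (fun y => besselClifford (s + d / 2) (-y) ^ 2)
    rw [integral_rpow_mul_besselClifford_sq hν, div_mul_div_comm, mul_one,
      show 2 * (s + d / 2) = d + 2 * s by ring] at hscale
    rw [← hscale, ← integral_const_mul]
    refine setIntegral_congr_fun measurableSet_Ioi fun r hr => ?_
    have hr : 0 < r := hr
    have hr_pow : r ^ (d + 2 * s - 1) = r ^ (d - 1) * r ^ (2 * s) := by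
      rw [← rpow_add hr]; ring_nf
    simp only [hr_pow, mul_rpow two_pi_pos.le hr.le]
    ring_nf
  simp_rw [fourier_truncPow_sub_norm_sq hs hc, Complex.norm_real, Real.norm_eq_abs, sq_abs]
  rw [integral_fun_norm_eq fun r => (2 * π * r) ^ (2 * s) *
    (A * besselClifford (s + d / 2) (-(c * (π * r) ^ 2))) ^ 2, hradial]
  have hpi : (2 * π) ^ (2 * s) * (π ^ (d / 2)) ^ 2 * (π ^ 2) ^ (-(s + d / 2)) = 2 ^ (2 * s) := by
    rw [mul_rpow two_pos.le pi_pos.le, ← rpow_natCast_mul pi_pos.le, ← rpow_mul_natCast pi_pos.le,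
      mul_assoc, mul_assoc, ← rpow_add pi_pos, ← rpow_add pi_pos]
    ring_nf
    rw [rpow_zero, mul_one]
  have hcpow : (c ^ (s + d / 2)) ^ 2 * c ^ (-(s + d / 2)) = c ^ (s + d / 2) := by
    rw [sq, mul_assoc, ← rpow_add hc, add_neg_cancel, rpow_zero, mul_one]
  rw [mul_rpow hc.le (sq_nonneg π)]
  linear_combination 2 * π ^ (d / 2) / Gamma (d / 2) * Gamma (s + 1) ^ 2 / (d + 2 * s) *
    ((c ^ (s + d / 2)) ^ 2 * c ^ (-(s + d / 2)) * hpi + 2 ^ (2 * s) * hcpow)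

lemma ite_norm_le_ae_eq_truncPow [Nontrivial V] (s : ℝ) {k : ℝ} (hk : 0 < k) :
    (fun x : V => if ‖x‖ ≤ k then (k ^ 2 - ‖x‖ ^ 2) ^ s else 0) =ᵐ[volume]
      fun x => truncPow s (k ^ 2 - ‖x‖ ^ 2) := by
  filter_upwards [measure_eq_zero_iff_ae_notMem.1
    (Measure.addHaar_sphere_of_ne_zero volume (0 : V) hk.ne')] with x hx
  rw [mem_sphere_zero_iff_norm] at hx
  rcases lt_or_gt_of_ne hx with h | h
  · rw [if_pos h.le, truncPow_of_pos s (sub_pos.2 (by gcongr))]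
  · rw [if_neg h.not_ge, truncPow_of_nonpos s (sub_nonpos.2 (by gcongr))]

end Energy

lemma omegaN_mul_natCast {N : ℕ} (hN : 1 ≤ N) :
    omegaN N * N = 2 * π ^ (N / 2 : ℝ) / Gamma (N / 2) := by
  have : (0 : ℝ) < N := by positivity
  rw [omegaN, Gamma_add_one (by positivity)]
  field_simp

theorem energy_of_bump_general (N : ℕ) (hN : 1 ≤ N) (s : ℝ) (hs : -1 < s)
    (hNs : 0 < (N : ℝ) + 2 * s) (k : ℝ) (hk : 0 < k) :
    esE N s (fun x => if ‖x‖ ≤ k then (k ^ 2 - ‖x‖ ^ 2) ^ s else 0) =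
      ENNReal.ofReal ((2 : ℝ) ^ (2 * s) * omegaN N * N / ((N : ℝ) + 2 * s) *
        Real.Gamma (s + 1) ^ 2 * k ^ ((N : ℝ) + 2 * s)) := by
  have : NeZero N := ⟨by lia⟩
  have hFT (ξ : Rn N) : FT N (fun x => if ‖x‖ ≤ k then (k ^ 2 - ‖x‖ ^ 2) ^ s else 0) ξ =
      𝓕 (fun x : Rn N => (truncPow s (k ^ 2 - ‖x‖ ^ 2) : ℂ)) ξ :=
    fourier_congr_ae ((ite_norm_le_ae_eq_truncPow s hk).fun_comp Complex.ofReal) ξ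
  have henergy := integral_rpow_mul_norm_fourier_truncPow_sq (V := Rn N) hs
    (by rwa [finrank_euclideanSpace_fin]) (sq_pos_of_pos hk)
  rw [finrank_euclideanSpace_fin, ← omegaN_mul_natCast hN, ← rpow_natCast_mul hk.le,
    show ((2 : ℕ) : ℝ) * (s + N / 2) = N + 2 * s by push_cast; ring, ← mul_assoc] at henergy
  have hpos : 0 < 2 ^ (2 * s) * omegaN N * N / (N + 2 * s) * Gamma (s + 1) ^ 2 *
      k ^ (N + 2 * s) := by
    have h : 0 < s + 1 := by linarith
    rw [omegaN]
    positivity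
  simp_rw [esE, hFT]
  rw [← ofReal_integral_eq_lintegral_ofReal (integrable_of_integral_eq_of_pos henergy hpos)
    (.of_forall fun ξ => by positivity), henergy]

/-- the exact fractional energy of `f(x) = (k² - |x|²)₊^s`. -/
theorem energy_of_bump (N : ℕ) (hN : 1 ≤ N) (s : ℝ) (hs0 : 0 < s) (hs1 : s < 1)
    (k : ℝ) (hk : 0 < k) :
    esE N s (fun x => if ‖x‖ ≤ k then (k ^ 2 - ‖x‖ ^ 2) ^ s else 0) =
      ENNReal.ofReal ((2 : ℝ) ^ (2 * s) * omegaN N * N / ((N : ℝ) + 2 * s) *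
        Real.Gamma (s + 1) ^ 2 * k ^ ((N : ℝ) + 2 * s)) := by
  exact energy_of_bump_general N hN s (by linarith) (by positivity) k hk
end
end
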